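/- arXiv:0910.3603 — 2 statements merged into one kernel-verified Lean document; each statement's English description precedes it below -/
import Mathlib

section
/- Suppose the filter transition kernel Π admits a unique Π-invariant probability measure 𝕄 on P(E). Then for every probability measure 𝕄₀ on P(E) and every bounded continuous function f : P(E) → ℝ, the Cesàro averages (1/n) Σ_{k=1}^n ∫ (Π^k f) d𝕄₀ converge to ∫ f d𝕄 as n → ∞, where Π^k f denotes the k-fold iterate Π(Π^{k−1} f) with Π^0 f = f. -/
open MeasureTheory Filter Topology ENNReal

/-- `P(E)`: probability vectors on a countable set `E`, with the topology of
pointwise (equivalently, weak) convergence inherited from `E → ℝ`. -/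
abbrev ProbVec (E : Type*) := {p : E → ℝ // (∀ i, 0 ≤ p i) ∧ HasSum p 1}

/-- Row-vector/matrix product `(p M(y))_j = ∑_i p_i M_{ij}(y)`. -/
noncomputable def rowMul {E F : Type*} (M : F → E → E → ℝ) (p : E → ℝ) (y : F) : E → ℝ :=
  fun j => ∑' i, p i * M y i j

/-- Iterated product `p M(y₁)⋯M(yₙ)` along a list of observations. -/
noncomputable def rowIter {E F : Type*} (M : F → E → E → ℝ) (p : E → ℝ) (ys : List F) : E → ℝ :=
  ys.foldl (rowMul M) p

/-- `p 1 = ∑_j p_j`. -/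
noncomputable def rowTot {E : Type*} (p : E → ℝ) : ℝ := ∑' j, p j

/-- One step of the filter: `μ ↦ μM(y)/(μM(y)1)` (junk value `μ` when undefined). -/
noncomputable def filterStep {E F : Type*} (M : F → E → E → ℝ) (μ : ProbVec E) (y : F) :
    ProbVec E := by
  classical
  exact if h : ∃ ν : ProbVec E, ∀ j,
      (ν : E → ℝ) j * rowTot (rowMul M (μ : E → ℝ) y) = rowMul M (μ : E → ℝ) y j
    then h.choose else μ

/-- The filter `μM(y₁)⋯M(yₙ)/(μM(y₁)⋯M(yₙ)1)` (junk value `μ` when undefined). -/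
noncomputable def filterList {E F : Type*} (M : F → E → E → ℝ) (μ : ProbVec E) (ys : List F) :
    ProbVec E := by
  classical
  exact if h : ∃ ν : ProbVec E, ∀ j,
      (ν : E → ℝ) j * rowTot (rowIter M (μ : E → ℝ) ys) = rowIter M (μ : E → ℝ) ys j
    then h.choose else μ

/-- The filter `π_n^μ(y)` as a function of the observation path `y : ℕ → F`
(the coordinate `y k` represents the observation `y_{k+1}`). -/
noncomputable def filterSeq {E F : Type*} (M : F → E → E → ℝ) (μ : ProbVec E) (y : ℕ → F)
    (n : ℕ) : ProbVec E :=
  filterList M μ (List.ofFn fun k : Fin n => y k)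

/-- The filter transition kernel `Π`, acting on functions:
`Πf(μ) = ∫ f(μM(y)/(μM(y)1)) ⬝ (μM(y)1) φ(dy)`. -/
noncomputable def filterKernel {E F : Type*} [MeasurableSpace F] (M : F → E → E → ℝ)
    (φ : Measure F) (f : ProbVec E → ℝ) (μ : ProbVec E) : ℝ :=
  ∫ y, f (filterStep M μ y) * rowTot (rowMul M (μ : E → ℝ) y) ∂φ

/-- Bounded continuous real functions on `P(E)`. -/
def IsBddCont {E : Type*} (f : ProbVec E → ℝ) : Prop :=
  Continuous f ∧ ∃ C : ℝ, ∀ μ, |f μ| ≤ C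

/-- A probability measure `𝕄` on `P(E)` is `Π`-invariant if `∫ Πf d𝕄 = ∫ f d𝕄`
for every bounded continuous `f`. -/
def IsPiInvariant {E F : Type*} [MeasurableSpace F] (M : F → E → E → ℝ) (φ : Measure F)
    (𝕄 : ProbabilityMeasure (ProbVec E)) : Prop :=
  ∀ f : ProbVec E → ℝ, IsBddCont f →
    ∫ μ, filterKernel M φ f μ ∂(𝕄 : Measure (ProbVec E)) =
      ∫ μ, f μ ∂(𝕄 : Measure (ProbVec E))

/-- The signal transition matrix `P_{ij} = ∫ M_{ij}(y) φ(dy)`. -/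
noncomputable def transMat {E F : Type*} [MeasurableSpace F] (M : F → E → E → ℝ)
    (φ : Measure F) : E → E → ℝ :=
  fun i j => ∫ y, M y i j ∂φ

/-- Powers of a transition matrix on a countable state space. -/
noncomputable def matPow {E : Type*} [DecidableEq E] (P : E → E → ℝ) : ℕ → E → E → ℝ
  | 0 => fun i j => if i = j then 1 else 0
  | n + 1 => fun i j => ∑' k, matPow P n i k * P k j

noncomputable def czRm {E F : Type*} (M : F → E → E → ℝ) (μ : ProbVec E) (y : F) (j : E) : ℝ≥0∞ :=
  ∑' i, ENNReal.ofReal (μ.1 i) * ENNReal.ofReal (M y i j)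

noncomputable def czRt {E F : Type*} (M : F → E → E → ℝ) (μ : ProbVec E) (y : F) : ℝ≥0∞ :=
  ∑' j, czRm M μ y j

def CzGood {E F : Type*} (M : F → E → E → ℝ) (y : F) : Prop :=
  ∃ C : ℝ, ∀ (i : E) (s : Finset E), ∑ j ∈ s, M y i j ≤ C

noncomputable def czP {E F : Type*} [MeasurableSpace F] (M : F → E → E → ℝ) (φ : Measure F)
    (i j : E) : ℝ≥0∞ := ∫⁻ y, ENNReal.ofReal (M y i j) ∂φ

lemma cz_tsum_one {E : Type*} (μ : ProbVec E) : ∑' i, ENNReal.ofReal (μ.1 i) = 1 := by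
  rw [← ENNReal.ofReal_tsum_of_nonneg μ.2.1 μ.2.2.summable, μ.2.2.tsum_eq]; simp

lemma cz_le_one {E : Type*} (μ : ProbVec E) (i : E) : μ.1 i ≤ 1 :=
  le_hasSum μ.2.2 i (fun j _ => μ.2.1 j)

lemma czRt_eq {E F : Type*} (M : F → E → E → ℝ) (μ : ProbVec E) (y : F) :
    czRt M μ y = ∑' i, ENNReal.ofReal (μ.1 i) * ∑' j, ENNReal.ofReal (M y i j) := by
  unfold czRt czRm
  rw [ENNReal.tsum_comm]
  simp_rw [ENNReal.tsum_mul_left]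

lemma CzGood.row {E F : Type*} {M : F → E → E → ℝ} (hMnn : ∀ y i j, 0 ≤ M y i j) {y : F}
    (h : CzGood M y) : ∃ C : ℝ, ∀ i, ∑' j, ENNReal.ofReal (M y i j) ≤ ENNReal.ofReal C := by
  obtain ⟨C, hC⟩ := h
  refine ⟨C, fun i => ?_⟩
  rw [ENNReal.tsum_eq_iSup_sum]
  refine iSup_le fun s => ?_
  rw [← ENNReal.ofReal_sum_of_nonneg (fun j _ => hMnn y i j)]
  exact ENNReal.ofReal_le_ofReal (hC i s)

lemma CzGood.rt_ne_top {E F : Type*} {M : F → E → E → ℝ} (hMnn : ∀ y i j, 0 ≤ M y i j) {y : F}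
    (h : CzGood M y) (μ : ProbVec E) : czRt M μ y ≠ ∞ := by
  obtain ⟨C, hC⟩ := h.row hMnn
  rw [czRt_eq]
  refine ne_top_of_le_ne_top (b := ENNReal.ofReal C) ENNReal.ofReal_ne_top ?_
  calc _ ≤ ∑' i, ENNReal.ofReal (μ.1 i) * ENNReal.ofReal C :=
        ENNReal.tsum_le_tsum fun i => by gcongr; exact hC i
    _ = _ := by rw [ENNReal.tsum_mul_right, cz_tsum_one, one_mul]

lemma czRm_le_rt {E F : Type*} (M : F → E → E → ℝ) (μ : ProbVec E) (y : F) (j : E) :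
    czRm M μ y j ≤ czRt M μ y := ENNReal.le_tsum j

lemma cz_rowMul {E F : Type*} {M : F → E → E → ℝ} (hMnn : ∀ y i j, 0 ≤ M y i j) {y : F}
    (μ : ProbVec E) (j : E) :
    rowMul M μ.1 y j = (czRm M μ y j).toReal := by
  unfold rowMul czRm
  rw [ENNReal.tsum_toReal_eq (fun a => by finiteness)]
  refine tsum_congr fun i => ?_
  rw [ENNReal.toReal_mul, ENNReal.toReal_ofReal (μ.2.1 i), ENNReal.toReal_ofReal (hMnn y i j)]

lemma cz_rowTot {E F : Type*} {M : F → E → E → ℝ} (hMnn : ∀ y i j, 0 ≤ M y i j) {y : F}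
    (h : CzGood M y) (μ : ProbVec E) :
    rowTot (rowMul M μ.1 y) = (czRt M μ y).toReal := by
  unfold rowTot czRt
  rw [ENNReal.tsum_toReal_eq
    (fun a => ne_top_of_le_ne_top (h.rt_ne_top hMnn μ) (czRm_le_rt M μ y a))]
  exact tsum_congr fun j => cz_rowMul hMnn μ j

open Classical in
noncomputable def czStepFun {E F : Type*} (M : F → E → E → ℝ) (lam : ProbVec E)
    (μ : ProbVec E) (y : F) (j : E) : ℝ :=
  if czRt M μ y = 0 ∨ czRt M μ y = ∞ then lam.1 j else (czRm M μ y j / czRt M μ y).toReal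

lemma czStepFun_mem {E F : Type*} (M : F → E → E → ℝ) (lam : ProbVec E)
    (μ : ProbVec E) (y : F) :
    (∀ j, 0 ≤ czStepFun M lam μ y j) ∧ HasSum (czStepFun M lam μ y) 1 := by
  by_cases h : czRt M μ y = 0 ∨ czRt M μ y = ∞
  · have : czStepFun M lam μ y = lam.1 := by
      funext j; simp only [czStepFun, if_pos h]
    rw [this]; exact lam.2
  · have : czStepFun M lam μ y = fun j => (czRm M μ y j / czRt M μ y).toReal := by
      funext j; simp only [czStepFun, if_neg h]
    rw [this]
    push Not at h
    refine ⟨fun j => ENNReal.toReal_nonneg, ?_⟩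
    have hs : ∑' j, czRm M μ y j / czRt M μ y = 1 := by
      simp_rw [div_eq_mul_inv]
      rw [ENNReal.tsum_mul_right]
      exact ENNReal.mul_inv_cancel h.1 h.2
    have := ENNReal.hasSum_toReal (f := fun j => czRm M μ y j / czRt M μ y) (by rw [hs]; simp)
    rwa [← ENNReal.tsum_toReal_eq, hs, ENNReal.toReal_one] at this
    intro j
    exact ENNReal.div_ne_top (ne_top_of_le_ne_top h.2 (czRm_le_rt M μ y j)) h.1

noncomputable def czStep {E F : Type*} (M : F → E → E → ℝ) (lam : ProbVec E)
    (μ : ProbVec E) (y : F) : ProbVec E := ⟨czStepFun M lam μ y, czStepFun_mem M lam μ y⟩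

lemma cz_step_mul {E F : Type*} {M : F → E → E → ℝ} (lam : ProbVec E)
    (μ : ProbVec E) {y : F} (h : czRt M μ y ≠ ∞) (j : E) :
    ENNReal.ofReal ((czStep M lam μ y).1 j) * czRt M μ y = czRm M μ y j := by
  by_cases h0 : czRt M μ y = 0
  · have := czRm_le_rt M μ y j
    rw [h0] at this ⊢
    simp [nonpos_iff_eq_zero.1 this]
  · have : (czStep M lam μ y).1 j = (czRm M μ y j / czRt M μ y).toReal := by
      simp [czStep, czStepFun, h0, h]
    rw [this, ENNReal.ofReal_toReal, ENNReal.div_mul_cancel h0 h]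
    exact ENNReal.div_ne_top (ne_top_of_le_ne_top h (czRm_le_rt M μ y j)) h0

lemma cz_filterStep {E F : Type*} {M : F → E → E → ℝ} (hMnn : ∀ y i j, 0 ≤ M y i j)
    (lam : ProbVec E) {y : F} (h : CzGood M y) (μ : ProbVec E) (f : ProbVec E → ℝ) :
    f (filterStep M μ y) * rowTot (rowMul M μ.1 y)
      = f (czStep M lam μ y) * (czRt M μ y).toReal := by
  have hfin := h.rt_ne_top hMnn μ
  rw [cz_rowTot hMnn h]
  by_cases h0 : (czRt M μ y).toReal = 0
  · simp [h0]
  congr 2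
  have key : ∀ j, (czStep M lam μ y).1 j * rowTot (rowMul M μ.1 y) = rowMul M μ.1 y j := by
    intro j
    rw [cz_rowTot hMnn h, cz_rowMul hMnn, ← cz_step_mul lam μ hfin j, ENNReal.toReal_mul,
      ENNReal.toReal_ofReal ((czStep M lam μ y).2.1 j)]
  have hex : ∃ ν : ProbVec E, ∀ j,
      (ν : E → ℝ) j * rowTot (rowMul M (μ : E → ℝ) y) = rowMul M (μ : E → ℝ) y j := ⟨_, key⟩
  have hst : ∀ j, (filterStep M μ y).1 j * rowTot (rowMul M μ.1 y) = rowMul M μ.1 y j := by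
    unfold filterStep
    rw [dif_pos hex]
    exact hex.choose_spec
  apply Subtype.ext
  funext j
  have := (hst j).trans (key j).symm
  rw [cz_rowTot hMnn h] at this
  exact mul_right_cancel₀ h0 this

lemma cz_meas_rm {E F : Type*} [Countable E] [MeasurableSpace F] {M : F → E → E → ℝ}
    (hMmeas : ∀ i j, Measurable fun y => M y i j) (j : E) :
    Measurable fun z : ProbVec E × F => czRm M z.1 z.2 j := by
  unfold czRm
  refine Measurable.tsum fun i => ?_
  have h1 : Measurable fun z : ProbVec E × F => ENNReal.ofReal (z.1.1 i) :=
    ((measurable_pi_apply i).comp (measurable_subtype_coe.comp measurable_fst)).ennreal_ofReal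
  have h2 : Measurable fun z : ProbVec E × F => ENNReal.ofReal (M z.2 i j) :=
    ((hMmeas i j).comp measurable_snd).ennreal_ofReal
  exact h1.mul h2

lemma cz_meas_rt {E F : Type*} [Countable E] [MeasurableSpace F] {M : F → E → E → ℝ}
    (hMmeas : ∀ i j, Measurable fun y => M y i j) :
    Measurable fun z : ProbVec E × F => czRt M z.1 z.2 := by
  unfold czRt
  exact Measurable.tsum fun j => cz_meas_rm hMmeas j

lemma cz_meas_step {E F : Type*} [Countable E] [MeasurableSpace F] {M : F → E → E → ℝ}
    (hMmeas : ∀ i j, Measurable fun y => M y i j)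
    (lam : ProbVec E) : Measurable fun z : ProbVec E × F => czStep M lam z.1 z.2 := by
  unfold czStep
  refine Measurable.subtype_mk ?_
  refine measurable_pi_lambda _ fun j => ?_
  unfold czStepFun
  have h := cz_meas_rt (M := M) hMmeas
  refine Measurable.ite ?_ measurable_const ?_
  · exact (h (measurableSet_singleton 0)).union (h (measurableSet_singleton ∞))
  · exact ((cz_meas_rm hMmeas j).div h).ennreal_toReal

lemma cz_filterKernel {E F : Type*} [MeasurableSpace F] {φ : Measure F}
    {M : F → E → E → ℝ} (hMnn : ∀ y i j, 0 ≤ M y i j)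
    (hg : ∀ᵐ y ∂φ, CzGood M y) (lam : ProbVec E) (f : ProbVec E → ℝ) (μ : ProbVec E) :
    filterKernel M φ f μ = ∫ y, f (czStep M lam μ y) * (czRt M μ y).toReal ∂φ := by
  unfold filterKernel
  refine integral_congr_ae ?_
  filter_upwards [hg] with y hy
  exact cz_filterStep hMnn lam hy μ f

lemma cz_lint_rm {E F : Type*} [Countable E] [MeasurableSpace F] (φ : Measure F)
    {M : F → E → E → ℝ} (hMmeas : ∀ i j, Measurable fun y => M y i j) (μ : ProbVec E) (j : E) :
    ∫⁻ y, czRm M μ y j ∂φ = ∑' i, ENNReal.ofReal (μ.1 i) * czP M φ i j := by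
  unfold czRm czP
  rw [lintegral_tsum (fun i => ((hMmeas i j).ennreal_ofReal.const_mul _).aemeasurable)]
  exact tsum_congr fun i => lintegral_const_mul _ (hMmeas i j).ennreal_ofReal

lemma cz_lint_rt {E F : Type*} [Countable E] [MeasurableSpace F] (φ : Measure F)
    {M : F → E → E → ℝ} (hMmeas : ∀ i j, Measurable fun y => M y i j) (μ : ProbVec E) :
    ∫⁻ y, czRt M μ y ∂φ = ∑' i, ENNReal.ofReal (μ.1 i) * ∑' j, czP M φ i j := by
  unfold czRt
  have hm : ∀ j, AEMeasurable (fun y => czRm M μ y j) φ := fun j =>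
    ((cz_meas_rm hMmeas j).comp (measurable_const.prodMk measurable_id)).aemeasurable
  rw [lintegral_tsum hm]
  simp_rw [cz_lint_rm φ hMmeas]
  rw [ENNReal.tsum_comm]
  simp_rw [ENNReal.tsum_mul_left]

/-- continuity of linear functionals with bounded coefficients -/
lemma cz_cont_lin {E : Type*} (a : E → ℝ≥0∞) (C : ℝ) (ha : ∀ i, a i ≤ ENNReal.ofReal C) :
    Continuous fun μ : ProbVec E => ∑' i, ENNReal.ofReal (μ.1 i) * a i := by
  have hl : ∀ b : E → ℝ≥0∞, (∀ i, b i ≤ ENNReal.ofReal C) → LowerSemicontinuous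
      fun μ : ProbVec E => ∑' i, ENNReal.ofReal (μ.1 i) * b i := by
    intro b hb
    refine lowerSemicontinuous_tsum fun i => Continuous.lowerSemicontinuous ?_
    have h1 : Continuous fun μ : ProbVec E => ENNReal.ofReal (μ.1 i) :=
      ENNReal.continuous_ofReal.comp ((continuous_apply i).comp continuous_subtype_val)
    exact (ENNReal.continuous_mul_const (ne_top_of_le_ne_top ENNReal.ofReal_ne_top (hb i))).comp h1
  rw [continuous_iff_lower_upperSemicontinuous]
  refine ⟨hl a ha, ?_⟩
  have hb := hl (fun i => ENNReal.ofReal C - a i) (fun i => tsub_le_self)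
  have := (ENNReal.continuous_sub_left (a := ENNReal.ofReal C)
    ENNReal.ofReal_ne_top).comp_lowerSemicontinuous_antitone hb
      (fun x y hxy => tsub_le_tsub_left hxy _)
  convert this using 1
  funext μ
  have hsum : (∑' i, ENNReal.ofReal (μ.1 i) * a i)
      + (∑' i, ENNReal.ofReal (μ.1 i) * (ENNReal.ofReal C - a i)) = ENNReal.ofReal C := by
    rw [← ENNReal.tsum_add]
    simp_rw [← mul_add]
    simp_rw [fun i => add_tsub_cancel_of_le (ha i)]
    rw [ENNReal.tsum_mul_right, cz_tsum_one, one_mul]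
  simp only [Function.comp]
  refine ENNReal.eq_sub_of_add_eq ?_ hsum
  refine ne_top_of_le_ne_top (b := ENNReal.ofReal C) ENNReal.ofReal_ne_top ?_
  exact le_of_le_of_eq (le_add_self) hsum

lemma cz_cont_rm {E F : Type*} {M : F → E → E → ℝ} (hMnn : ∀ y i j, 0 ≤ M y i j) {y : F}
    (h : CzGood M y) (j : E) : Continuous fun μ : ProbVec E => czRm M μ y j := by
  obtain ⟨C, hC⟩ := h.row hMnn
  exact cz_cont_lin _ C fun i => (ENNReal.le_tsum j).trans (hC i)

lemma cz_cont_rt {E F : Type*} {M : F → E → E → ℝ} (hMnn : ∀ y i j, 0 ≤ M y i j) {y : F}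
    (h : CzGood M y) : Continuous fun μ : ProbVec E => czRt M μ y := by
  obtain ⟨C, hC⟩ := h.row hMnn
  simp_rw [czRt_eq]
  exact cz_cont_lin _ C hC

lemma cz_cont_step {E F : Type*} {M : F → E → E → ℝ} (hMnn : ∀ y i j, 0 ≤ M y i j) {y : F}
    (h : CzGood M y) (lam μ : ProbVec E) (h0 : czRt M μ y ≠ 0) :
    ContinuousAt (fun μ : ProbVec E => czStep M lam μ y) μ := by
  rw [ContinuousAt, tendsto_subtype_rng, tendsto_pi_nhds]
  intro j
  have hev : ∀ᶠ ν in 𝓝 μ, czRt M ν y ≠ 0 :=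
    (cz_cont_rt hMnn h).continuousAt.eventually_ne h0
  have heq : ∀ ν : ProbVec E, czRt M ν y ≠ 0 →
      (czStep M lam ν y).1 j = (czRm M ν y j / czRt M ν y).toReal := by
    intro ν hν
    simp [czStep, czStepFun, hν, h.rt_ne_top hMnn ν]
  rw [heq μ h0]
  have hm : czRm M μ y j ≠ ∞ := ne_top_of_le_ne_top (h.rt_ne_top hMnn μ) (czRm_le_rt M μ y j)
  have : Tendsto (fun ν => (czRm M ν y j / czRt M ν y).toReal) (𝓝 μ)
      (𝓝 (czRm M μ y j / czRt M μ y).toReal) := by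
    refine (ENNReal.tendsto_toReal (ENNReal.div_ne_top hm h0)).comp ?_
    exact ENNReal.Tendsto.div (cz_cont_rm hMnn h j).continuousAt (Or.inr h0)
      (cz_cont_rt hMnn h).continuousAt (Or.inr hm)
  refine this.congr' ?_
  filter_upwards [hev] with ν hν
  exact (heq ν hν).symm

lemma cz_matPow_nonneg {E : Type*} [DecidableEq E] {P : E → E → ℝ} (hP : ∀ i j, 0 ≤ P i j)
    (n : ℕ) : ∀ i j, 0 ≤ matPow P n i j := by
  induction n with
  | zero => intro i j; simp only [matPow]; split_ifs <;> norm_num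
  | succ n ih => intro i j; exact tsum_nonneg fun k => mul_nonneg (ih i k) (hP k j)

lemma cz_irr {E : Type*} [DecidableEq E] {P : E → E → ℝ} (hP : ∀ i j, 0 ≤ P i j)
    (S : E → Prop) (hS : ∀ i j, S i → 0 < P i j → S j) (n : ℕ) :
    ∀ i j, S i → 0 < matPow P n i j → S j := by
  induction n with
  | zero =>
    intro i j hi h
    simp only [matPow] at h
    split_ifs at h with hij
    · exact hij ▸ hi
    · exact absurd h (lt_irrefl _)
  | succ n ih =>
    intro i j hi h
    simp only [matPow] at h
    by_contra hj
    have : ∀ k, matPow P n i k * P k j = 0 := by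
      intro k
      by_contra hk
      have h1 : matPow P n i k ≠ 0 := left_ne_zero_of_mul hk
      have h2 : P k j ≠ 0 := right_ne_zero_of_mul hk
      exact hj (hS k j (ih i k hi (lt_of_le_of_ne (cz_matPow_nonneg hP n i k) h1.symm))
        (lt_of_le_of_ne (hP k j) h2.symm))
    simp [this] at h

lemma cz_transMat {E F : Type*} [MeasurableSpace F] (φ : Measure F)
    {M : F → E → E → ℝ} (hMmeas : ∀ i j, Measurable fun y => M y i j)
    (hMnn : ∀ y i j, 0 ≤ M y i j) (i j : E) : transMat M φ i j = (czP M φ i j).toReal := by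
  unfold transMat czP
  exact integral_eq_lintegral_of_nonneg_ae (ae_of_all _ fun y => hMnn y i j)
    (hMmeas i j).aestronglyMeasurable

lemma cz_row_one {E F : Type*} [MeasurableSpace F] {φ : Measure F}
    {M : F → E → E → ℝ} (hMmeas : ∀ i j, Measurable fun y => M y i j)
    (hMnn : ∀ y i j, 0 ≤ M y i j) (hPtrans : ∀ i, HasSum (fun j => transMat M φ i j) 1)
    (i : E) (hi : ∀ j, czP M φ i j ≠ ∞) : ∑' j, czP M φ i j = 1 := by
  have h := hPtrans i
  simp_rw [cz_transMat φ hMmeas hMnn] at h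
  have h2 := ENNReal.ofReal_tsum_of_nonneg (fun j => ENNReal.toReal_nonneg) h.summable
  rw [h.tsum_eq, ENNReal.ofReal_one] at h2
  rw [h2]
  exact tsum_congr fun j => (ENNReal.ofReal_toReal (hi j)).symm

lemma cz_finite {E : Type*} [Countable E] [DecidableEq E]
    {F : Type*} [MeasurableSpace F]
    (φ : Measure F) (M : F → E → E → ℝ)
    (hMmeas : ∀ i j, Measurable fun y => M y i j)
    (hMnn : ∀ y i j, 0 ≤ M y i j)
    (hMbd : ∀ᵐ y ∂φ, CzGood M y)
    (hPtrans : ∀ i, HasSum (fun j => transMat M φ i j) 1)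
    (hPirr : ∀ i j : E, ∃ n : ℕ, 0 < matPow (transMat M φ) n i j)
    (lam : ProbVec E)
    (𝕄 : ProbabilityMeasure (ProbVec E)) (h𝕄 : IsPiInvariant M φ 𝕄) :
    ∀ i j, czP M φ i j ≠ ∞ := by
  have hrt : ∀ μ : ProbVec E, Measurable fun y => czRt M μ y := fun μ =>
    (cz_meas_rt hMmeas).comp (measurable_const.prodMk measurable_id)
  have hrm : ∀ (μ : ProbVec E) j, Measurable fun y => czRm M μ y j := fun μ j =>
    (cz_meas_rm hMmeas j).comp (measurable_const.prodMk measurable_id)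
  have hPi1 : ∀ μ, filterKernel M φ (fun _ => 1) μ
      = (∑' i, ENNReal.ofReal (μ.1 i) * ∑' j, czP M φ i j).toReal := by
    intro μ
    rw [cz_filterKernel hMnn hMbd lam, ← cz_lint_rt φ hMmeas]
    simp only [one_mul]
    exact integral_toReal (hrt μ).aemeasurable
      (hMbd.mono fun y hy => (hy.rt_ne_top hMnn μ).lt_top)
  have hdich : ∀ μ : ProbVec E, (∑' i, ENNReal.ofReal (μ.1 i) * ∑' j, czP M φ i j) = ∞ ∨
      ((∑' i, ENNReal.ofReal (μ.1 i) * ∑' j, czP M φ i j) = 1 ∧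
        ∀ i, μ.1 i ≠ 0 → ∀ j, czP M φ i j ≠ ∞) := by
    intro μ
    by_cases h : (∑' i, ENNReal.ofReal (μ.1 i) * ∑' j, czP M φ i j) = ∞
    · exact Or.inl h
    right
    have h2 : ∀ i, μ.1 i ≠ 0 → ∀ j, czP M φ i j ≠ ∞ := by
      intro i hi j hj
      apply h
      have h3 : ∑' j, czP M φ i j = ∞ := ENNReal.tsum_eq_top_of_eq_top ⟨j, hj⟩
      refine ENNReal.tsum_eq_top_of_eq_top ⟨i, ?_⟩
      rw [h3, ENNReal.mul_top]
      have := lt_of_le_of_ne (μ.2.1 i) hi.symm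
      simpa using this
    refine ⟨?_, h2⟩
    rw [← cz_tsum_one μ]
    refine tsum_congr fun i => ?_
    by_cases hi : μ.1 i = 0
    · simp [hi]
    · rw [cz_row_one hMmeas hMnn hPtrans i (h2 i hi), mul_one]
  have hint1 : ∫ μ, filterKernel M φ (fun _ => 1) μ ∂(𝕄 : Measure (ProbVec E)) = 1 := by
    rw [h𝕄 (fun _ => 1) ⟨continuous_const, 1, by simp⟩]; simp
  have hI1 : Integrable (fun μ => filterKernel M φ (fun _ => 1) μ) (𝕄 : Measure (ProbVec E)) := by
    by_contra hc
    rw [integral_undef hc] at hint1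
    exact zero_ne_one hint1
  have hle1 : ∀ μ, filterKernel M φ (fun _ => 1) μ ≤ 1 := by
    intro μ
    rw [hPi1]
    rcases hdich μ with h | h
    · simp [h]
    · simp [h.1]
  have hae1 : ∀ᵐ μ ∂(𝕄 : Measure (ProbVec E)), filterKernel M φ (fun _ => 1) μ = 1 := by
    have h0 : ∫ μ, (1 - filterKernel M φ (fun _ => 1) μ) ∂(𝕄 : Measure (ProbVec E)) = 0 := by
      rw [integral_sub (integrable_const _) hI1, hint1]; simp
    rw [integral_eq_zero_iff_of_nonneg (fun μ => sub_nonneg.2 (hle1 μ))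
      ((integrable_const _).sub hI1)] at h0
    filter_upwards [h0] with μ hμ
    simp only [Pi.zero_apply] at hμ
    linarith
  have hae : ∀ᵐ μ ∂(𝕄 : Measure (ProbVec E)),
      (∑' i, ENNReal.ofReal (μ.1 i) * ∑' j, czP M φ i j) = 1 ∧
        ∀ i, μ.1 i ≠ 0 → ∀ j, czP M φ i j ≠ ∞ := by
    filter_upwards [hae1] with μ hμ
    rcases hdich μ with h | h
    · rw [hPi1, h] at hμ; simp at hμ
    · exact h
  have hcoord : ∀ j, Continuous fun μ : ProbVec E => μ.1 j := fun j =>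
    (continuous_apply j).comp continuous_subtype_val
  have hcm : ∀ j, Measurable fun μ : ProbVec E => μ.1 j := fun j =>
    (measurable_pi_apply j).comp measurable_subtype_coe
  have hcI : ∀ j, Integrable (fun μ : ProbVec E => μ.1 j) (𝕄 : Measure (ProbVec E)) := fun j =>
    Integrable.of_bound (hcm j).aestronglyMeasurable 1 (ae_of_all _ fun μ => by
      rw [Real.norm_eq_abs, abs_of_nonneg (μ.2.1 j)]; exact cz_le_one μ j)
  have hPij : ∀ (μ : ProbVec E) j, filterKernel M φ (fun ν => ν.1 j) μ
      = (∑' i, ENNReal.ofReal (μ.1 i) * czP M φ i j).toReal := by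
    intro μ j
    rw [cz_filterKernel hMnn hMbd lam, ← cz_lint_rm φ hMmeas, ← integral_toReal
      (hrm μ j).aemeasurable
      (hMbd.mono fun y hy => (ne_top_of_le_ne_top (hy.rt_ne_top hMnn μ)
        (czRm_le_rt M μ y j)).lt_top)]
    refine integral_congr_ae ?_
    filter_upwards [hMbd] with y hy
    rw [← cz_step_mul lam μ (hy.rt_ne_top hMnn μ) j, ENNReal.toReal_mul,
      ENNReal.toReal_ofReal ((czStep M lam μ y).2.1 j)]
  have hle : ∀ᵐ μ ∂(𝕄 : Measure (ProbVec E)), ∀ j,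
      (∑' i, ENNReal.ofReal (μ.1 i) * czP M φ i j) ≤ 1 := by
    filter_upwards [hae] with μ hμ j
    rw [← hμ.1]
    refine ENNReal.tsum_le_tsum fun i => ?_
    gcongr
    exact ENNReal.le_tsum j
  have hb : ∀ i j, 0 < ∫ μ, μ.1 i ∂(𝕄 : Measure (ProbVec E)) → 0 < transMat M φ i j →
      0 < ∫ μ, μ.1 j ∂(𝕄 : Measure (ProbVec E)) := by
    intro i j hi hij
    rw [← h𝕄 (fun μ => μ.1 j) ⟨hcoord j, 1, fun μ => by
      rw [abs_of_nonneg (μ.2.1 j)]; exact cz_le_one μ j⟩]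
    refine lt_of_lt_of_le (mul_pos hi hij) ?_
    rw [← integral_mul_const]
    simp_rw [hPij]
    refine integral_mono_ae ((hcI i).mul_const _) ?_ ?_
    · refine Integrable.of_bound (C := 1) ?_ ?_
      · refine (Measurable.ennreal_toReal ?_).aestronglyMeasurable
        exact Measurable.tsum fun i => (hcm i).ennreal_ofReal.mul_const _
      · filter_upwards [hle] with μ hμ
        rw [Real.norm_eq_abs, abs_of_nonneg ENNReal.toReal_nonneg]
        exact ENNReal.toReal_le_of_le_ofReal zero_le_one (by simpa using hμ j)
    · filter_upwards [hle] with μ hμ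
      rw [cz_transMat φ hMmeas hMnn, ← ENNReal.toReal_ofReal (μ.2.1 i), ← ENNReal.toReal_mul]
      refine ENNReal.toReal_mono (ne_top_of_le_ne_top ENNReal.one_ne_top (hμ j)) ?_
      exact ENNReal.le_tsum (f := fun i => ENNReal.ofReal (μ.1 i) * czP M φ i j) i
  have hb0 : ∀ i, ∫ μ, μ.1 i ∂(𝕄 : Measure (ProbVec E)) = 0 →
      ∀ᵐ μ ∂(𝕄 : Measure (ProbVec E)), μ.1 i = 0 := by
    intro i hi
    rwa [integral_eq_zero_iff_of_nonneg (fun μ => μ.2.1 i) (hcI i)] at hi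
  have hbn : ∀ i, 0 ≤ ∫ μ, μ.1 i ∂(𝕄 : Measure (ProbVec E)) := fun i =>
    integral_nonneg fun μ => μ.2.1 i
  obtain ⟨i₀, hi₀⟩ : ∃ i, 0 < ∫ μ, μ.1 i ∂(𝕄 : Measure (ProbVec E)) := by
    by_contra hc
    push Not at hc
    have : ∀ᵐ μ ∂(𝕄 : Measure (ProbVec E)), ∀ i, μ.1 i = 0 :=
      ae_all_iff.2 fun i => hb0 i (le_antisymm (hc i) (hbn i))
    obtain ⟨μ, hμ⟩ := this.exists
    have := cz_tsum_one μ
    simp [hμ] at this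
  have hpos : ∀ i, 0 < ∫ μ, μ.1 i ∂(𝕄 : Measure (ProbVec E)) := by
    intro i
    obtain ⟨n, hn⟩ := hPirr i₀ i
    exact cz_irr (fun i j => by rw [cz_transMat φ hMmeas hMnn]; exact ENNReal.toReal_nonneg)
      (fun i => 0 < ∫ μ, μ.1 i ∂(𝕄 : Measure (ProbVec E))) hb n i₀ i hi₀ hn
  intro i j hij
  have : ∀ᵐ μ ∂(𝕄 : Measure (ProbVec E)), μ.1 i = 0 := by
    filter_upwards [hae] with μ hμ
    by_contra hne
    exact hμ.2 i hne j hij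
  have h0 : ∫ μ, μ.1 i ∂(𝕄 : Measure (ProbVec E)) = 0 := by
    rw [integral_congr_ae this]; simp
  exact (hpos i).ne' h0

lemma cz_lam_pos {E : Type*} [DecidableEq E] {P : E → E → ℝ} (hP : ∀ i j, 0 ≤ P i j)
    (hP1 : ∀ i j, P i j ≤ 1)
    (hPirr : ∀ i j : E, ∃ n : ℕ, 0 < matPow P n i j) (lam : ProbVec E)
    (hlamInv : ∀ j, ∑' i, (lam : E → ℝ) i * P i j = (lam : E → ℝ) j) (i : E) : 0 < lam.1 i := by
  obtain ⟨i₀, hi₀⟩ : ∃ i, 0 < lam.1 i := by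
    by_contra hc
    push Not at hc
    have := cz_tsum_one lam
    simp [fun i => le_antisymm (hc i) (lam.2.1 i)] at this
  obtain ⟨n, hn⟩ := hPirr i₀ i
  refine cz_irr hP (fun i => 0 < lam.1 i) (fun i j hi hij => ?_) n i₀ i hi₀ hn
  have hs : Summable fun i => lam.1 i * P i j := lam.2.2.summable.of_nonneg_of_le
    (fun i => mul_nonneg (lam.2.1 i) (hP i j))
    (fun i => mul_le_of_le_one_right (lam.2.1 i) (hP1 i j))
  rw [← hlamInv j]
  exact lt_of_lt_of_le (mul_pos hi hij)
    (hs.le_tsum i (fun k _ => mul_nonneg (lam.2.1 k) (hP k j)))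

noncomputable def czMeas {E F : Type*} [MeasurableSpace F] (M : F → E → E → ℝ)
    (φ : Measure F) (lam μ : ProbVec E) : Measure (ProbVec E) :=
  (φ.withDensity fun y => czRt M μ y).map fun y => czStep M lam μ y

lemma cz_lint_meas {E F : Type*} [Countable E] [MeasurableSpace F] (φ : Measure F)
    {M : F → E → E → ℝ} (hMmeas : ∀ i j, Measurable fun y => M y i j) (lam μ : ProbVec E)
    {g : ProbVec E → ℝ≥0∞} (hg : Measurable g) :
    ∫⁻ ν, g ν ∂(czMeas M φ lam μ) = ∫⁻ y, czRt M μ y * g (czStep M lam μ y) ∂φ := by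
  have hrt : Measurable fun y => czRt M μ y :=
    (cz_meas_rt hMmeas).comp (measurable_const.prodMk measurable_id)
  have hst : Measurable fun y => czStep M lam μ y :=
    (cz_meas_step hMmeas lam).comp (measurable_const.prodMk measurable_id)
  unfold czMeas
  rw [lintegral_map hg hst]
  exact lintegral_withDensity_eq_lintegral_mul _ hrt (hg.comp hst)

lemma cz_meas_meas {E F : Type*} [Countable E] [MeasurableSpace F] (φ : Measure F) [SigmaFinite φ]
    {M : F → E → E → ℝ} (hMmeas : ∀ i j, Measurable fun y => M y i j) (lam : ProbVec E) :
    Measurable (czMeas M φ lam) := by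
  refine Measure.measurable_of_measurable_coe _ fun s hs => ?_
  have h : ∀ μ, czMeas M φ lam μ s
      = ∫⁻ y, czRt M μ y * s.indicator 1 (czStep M lam μ y) ∂φ := by
    intro μ
    rw [← cz_lint_meas φ hMmeas lam μ (measurable_one.indicator hs), lintegral_indicator_one hs]
  simp_rw [h]
  have h1 : Measurable fun z : ProbVec E × F =>
      czRt M z.1 z.2 * s.indicator 1 (czStep M lam z.1 z.2) :=
    (cz_meas_rt hMmeas).mul ((measurable_one.indicator hs).comp (cz_meas_step hMmeas lam))
  exact h1.lintegral_prod_right'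

noncomputable def czKer {E F : Type*} [Countable E] [MeasurableSpace F] (φ : Measure F)
    [SigmaFinite φ]
    {M : F → E → E → ℝ} (hMmeas : ∀ i j, Measurable fun y => M y i j) (lam : ProbVec E) :
    ProbabilityTheory.Kernel (ProbVec E) (ProbVec E) :=
  ⟨czMeas M φ lam, cz_meas_meas φ hMmeas lam⟩

lemma cz_prob {E F : Type*} [Countable E] [MeasurableSpace F] (φ : Measure F)
    {M : F → E → E → ℝ} (hMmeas : ∀ i j, Measurable fun y => M y i j) (lam μ : ProbVec E)
    (hp : ∀ i, ∑' j, czP M φ i j = 1) : IsProbabilityMeasure (czMeas M φ lam μ) := by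
  constructor
  rw [← lintegral_one, cz_lint_meas φ hMmeas lam μ measurable_const]
  simp_rw [mul_one]
  rw [cz_lint_rt φ hMmeas]
  simp_rw [hp, mul_one, cz_tsum_one]

lemma cz_bary {E F : Type*} [Countable E] [MeasurableSpace F] (φ : Measure F)
    {M : F → E → E → ℝ} (hMmeas : ∀ i j, Measurable fun y => M y i j)
    (hMnn : ∀ y i j, 0 ≤ M y i j)
    (hMbd : ∀ᵐ y ∂φ, CzGood M y) (lam μ : ProbVec E) (j : E) :
    ∫⁻ ν, ENNReal.ofReal (ν.1 j) ∂(czMeas M φ lam μ)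
      = ∑' i, ENNReal.ofReal (μ.1 i) * czP M φ i j := by
  have hcm : Measurable fun μ : ProbVec E => ENNReal.ofReal (μ.1 j) :=
    ((measurable_pi_apply j).comp measurable_subtype_coe).ennreal_ofReal
  rw [cz_lint_meas φ hMmeas lam μ hcm, ← cz_lint_rm φ hMmeas]
  refine lintegral_congr_ae ?_
  filter_upwards [hMbd] with y hy
  rw [mul_comm]
  exact cz_step_mul lam μ (hy.rt_ne_top hMnn μ) j

lemma cz_int_meas {E F : Type*} [Countable E] [MeasurableSpace F] (φ : Measure F)
    {M : F → E → E → ℝ} (hMmeas : ∀ i j, Measurable fun y => M y i j)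
    (hMnn : ∀ y i j, 0 ≤ M y i j)
    (hMbd : ∀ᵐ y ∂φ, CzGood M y) (lam μ : ProbVec E) {f : ProbVec E → ℝ} (hf : Continuous f) :
    filterKernel M φ f μ = ∫ ν, f ν ∂(czMeas M φ lam μ) := by
  have hrt : Measurable fun y => czRt M μ y :=
    (cz_meas_rt hMmeas).comp (measurable_const.prodMk measurable_id)
  have hst : Measurable fun y => czStep M lam μ y :=
    (cz_meas_step hMmeas lam).comp (measurable_const.prodMk measurable_id)
  rw [cz_filterKernel hMnn hMbd lam]
  unfold czMeas
  rw [integral_map hst.aemeasurable hf.measurable.aestronglyMeasurable,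
    integral_withDensity_eq_integral_toReal_smul hrt
      (hMbd.mono fun y hy => (hy.rt_ne_top hMnn μ).lt_top)]
  refine integral_congr_ae (ae_of_all _ fun y => ?_)
  simp [mul_comm]

lemma cz_feller {E F : Type*} [Countable E] [MeasurableSpace F] (φ : Measure F)
    {M : F → E → E → ℝ} (hMmeas : ∀ i j, Measurable fun y => M y i j)
    (hMnn : ∀ y i j, 0 ≤ M y i j)
    (hMbd : ∀ᵐ y ∂φ, CzGood M y) (lam : ProbVec E)
    (hp : ∀ i, ∑' j, czP M φ i j = 1) {f : ProbVec E → ℝ} (hf : IsBddCont f) :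
    IsBddCont (filterKernel M φ f) := by
  have hprob := fun μ => cz_prob φ hMmeas lam μ hp
  have heq : filterKernel M φ f = fun μ => ∫ ν, f ν ∂(czMeas M φ lam μ) := by
    funext μ; exact cz_int_meas φ hMmeas hMnn hMbd lam μ hf.1
  rw [heq]
  obtain ⟨hfc, C, hC⟩ := hf
  constructor
  · rw [continuous_iff_continuousAt]
    intro μ
    let κ : ProbVec E → ProbabilityMeasure (ProbVec E) := fun μ => ⟨czMeas M φ lam μ, hprob μ⟩
    have hfc1 : FirstCountableTopology (E → ℝ) := inferInstance
    have hfc2 : FirstCountableTopology (ProbVec E) :=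
      Topology.IsInducing.subtypeVal.firstCountableTopology
    have hcg : (𝓝 μ).IsCountablyGenerated := hfc2.nhds_generated_countable μ
    have hκ : Tendsto κ (𝓝 μ) (𝓝 (κ μ)) := by
      refine tendsto_of_forall_isOpen_le_liminf' fun G hG => ?_
      have h : ∀ μ, czMeas M φ lam μ G
          = ∫⁻ y, czRt M μ y * G.indicator 1 (czStep M lam μ y) ∂φ := by
        intro μ
        rw [← cz_lint_meas φ hMmeas lam μ (measurable_one.indicator hG.measurableSet),
          lintegral_indicator_one hG.measurableSet]
      change czMeas M φ lam μ G ≤ liminf (fun ν => czMeas M φ lam ν G) (𝓝 μ)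
      simp_rw [h]
      refine le_trans ?_ (lintegral_liminf_le fun ν => ?_)
      · refine lintegral_mono_ae ?_
        filter_upwards [hMbd] with y hy
        by_cases h0 : czRt M μ y = 0
        · simp [h0]
        by_cases hG' : czStep M lam μ y ∈ G
        · have h1 : ∀ᶠ ν in 𝓝 μ, czStep M lam ν y ∈ G :=
            (cz_cont_step hMnn hy lam μ h0).eventually (hG.mem_nhds hG')
          have h2 : Tendsto (fun ν => czRt M ν y * G.indicator 1 (czStep M lam ν y)) (𝓝 μ)
              (𝓝 (czRt M μ y * G.indicator 1 (czStep M lam μ y))) := by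
            have h3 : Tendsto (fun ν => czRt M ν y) (𝓝 μ) (𝓝 (czRt M μ y)) :=
              (cz_cont_rt hMnn hy).continuousAt
            simp only [Set.indicator_of_mem hG', Pi.one_apply, mul_one]
            refine h3.congr' ?_
            filter_upwards [h1] with ν hν
            simp [Set.indicator_of_mem hν]
          exact h2.liminf_eq.ge
        · simp [Set.indicator_of_notMem hG']
      · have h1 : Measurable fun z : ProbVec E × F =>
            czRt M z.1 z.2 * G.indicator 1 (czStep M lam z.1 z.2) :=
          (cz_meas_rt hMmeas).mul
            ((measurable_one.indicator hG.measurableSet).comp (cz_meas_step hMmeas lam))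
        exact h1.comp (measurable_const.prodMk measurable_id)
    rw [ProbabilityMeasure.tendsto_iff_forall_integral_tendsto] at hκ
    exact hκ (BoundedContinuousFunction.ofNormedAddCommGroup f hfc C (fun μ => hC μ))
  · refine ⟨C, fun μ => ?_⟩
    have := hprob μ
    have := norm_integral_le_of_norm_le_const (μ := czMeas M φ lam μ) (f := f) (C := C)
      (ae_of_all _ fun ν => hC ν)
    simpa using this

noncomputable def czLaw {X : Type*} [MeasurableSpace X] (κ : ProbabilityTheory.Kernel X X)
    (ν : Measure X) : ℕ → Measure X
  | 0 => ν
  | k + 1 => (czLaw κ ν k).bind κ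

lemma czLaw_prob {X : Type*} [MeasurableSpace X] (κ : ProbabilityTheory.Kernel X X)
    [ProbabilityTheory.IsMarkovKernel κ] (ν : Measure X) [IsProbabilityMeasure ν] (k : ℕ) :
    IsProbabilityMeasure (czLaw κ ν k) := by
  induction k with
  | zero => simpa [czLaw]
  | succ k ih => simp only [czLaw]; infer_instance

lemma cz_int_bind {X : Type*} [MeasurableSpace X] (κ : ProbabilityTheory.Kernel X X)
    [ProbabilityTheory.IsMarkovKernel κ] (ν : Measure X) [IsProbabilityMeasure ν]
    {f : X → ℝ} (hf : Measurable f) {C : ℝ} (hC : ∀ x, |f x| ≤ C) :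
    ∫ x, f x ∂(ν.bind κ) = ∫ x, ∫ z, f z ∂(κ x) ∂ν := by
  have hI : Integrable f (ν.bind κ) :=
    Integrable.of_bound hf.aestronglyMeasurable C (ae_of_all _ fun x => hC x)
  rw [Measure.comp_eq_comp_const_apply] at hI ⊢
  rw [ProbabilityTheory.Kernel.integral_comp hI]
  simp

/-- tail mass -/
noncomputable def czTail {E : Type*} (A : Finset E) (μ : ProbVec E) : ℝ≥0∞ :=
  ∑' j : {j // j ∉ A}, ENNReal.ofReal (μ.1 j)

lemma czTail_add {E : Type*} (A : Finset E) (μ : ProbVec E) :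
    ENNReal.ofReal (∑ j ∈ A, μ.1 j) + czTail A μ = 1 := by
  rw [ENNReal.ofReal_sum_of_nonneg (fun j _ => μ.2.1 j), czTail, ← cz_tsum_one μ]
  exact ENNReal.sum_add_tsum_compl A _

lemma cz_tail_uniform {E : Type*} {p : E → E → ℝ≥0∞} (hp : ∀ i, ∑' j, p i j = 1)
    {l : E → ℝ≥0∞} (hl0 : ∀ i, l i ≠ 0) (hlt : ∀ i, l i ≠ ∞) (hl1 : ∑' i, l i = 1)
    (hlinv : ∀ j, ∑' i, l i * p i j = l j)
    (β : ℕ → E → ℝ≥0∞) (hβ0 : ∑' i, β 0 i = 1)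
    (hβ : ∀ k j, β (k + 1) j = ∑' i, β k i * p i j) {ε : ℝ≥0∞} (hε : ε ≠ 0) :
    ∃ A : Finset E, ∀ k, ∑' j : {j // j ∉ A}, β k j ≤ ε := by
  classical
  have hε2 : (0 : ℝ≥0∞) < ε / 2 := ENNReal.half_pos hε
  obtain ⟨S, hS⟩ := ((ENNReal.tendsto_tsum_compl_atTop_zero (f := β 0)
    (by rw [hβ0]; simp)).eventually (eventually_le_nhds hε2)).exists
  have hβfin : ∀ i, β 0 i ≠ ∞ := fun i => ne_top_of_le_ne_top (b := 1) (by simp)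
    (by rw [← hβ0]; exact ENNReal.le_tsum i)
  set C : ℝ≥0∞ := ∑ i ∈ S, β 0 i / l i with hC
  have hCfin : C ≠ ∞ := ENNReal.sum_ne_top.2 fun i _ => ENNReal.div_ne_top (hβfin i) (hl0 i)
  have key : ∀ k, ∃ r : E → ℝ≥0∞, (∀ j, β k j ≤ C * l j + r j) ∧ ∑' j, r j ≤ ε / 2 := by
    intro k
    induction k with
    | zero =>
      refine ⟨fun i => if i ∈ S then 0 else β 0 i, fun j => ?_, ?_⟩
      · by_cases hj : j ∈ S
        · simp only [hj, if_true, add_zero]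
          calc β 0 j = β 0 j / l j * l j := (ENNReal.div_mul_cancel (hl0 j) (hlt j)).symm
            _ ≤ C * l j := by
              gcongr
              exact Finset.single_le_sum (f := fun i => β 0 i / l i) (fun _ _ => zero_le) hj
        · simp [hj]
      · refine le_trans (le_of_eq ?_) hS
        rw [← ENNReal.sum_add_tsum_compl S, Finset.sum_eq_zero (fun i hi => if_pos hi), zero_add]
        exact tsum_congr fun j => if_neg j.2
    | succ k ih =>
      obtain ⟨r, hr, hrs⟩ := ih
      refine ⟨fun j => ∑' i, r i * p i j, fun j => ?_, ?_⟩
      · rw [hβ, ← hlinv j, ← ENNReal.tsum_mul_left, ← ENNReal.tsum_add]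
        refine ENNReal.tsum_le_tsum fun i => ?_
        rw [← mul_assoc, ← add_mul]
        gcongr
        exact hr i
      · rw [ENNReal.tsum_comm]
        simp_rw [ENNReal.tsum_mul_left, hp, mul_one]
        exact hrs
  have hCl : ∑' j, C * l j ≠ ∞ := by rw [ENNReal.tsum_mul_left, hl1, mul_one]; exact hCfin
  obtain ⟨A, hA⟩ := ((ENNReal.tendsto_tsum_compl_atTop_zero hCl).eventually
    (eventually_le_nhds hε2)).exists
  refine ⟨A, fun k => ?_⟩
  obtain ⟨r, hr, hrs⟩ := key k
  calc ∑' j : {j // j ∉ A}, β k j ≤ ∑' j : {j // j ∉ A}, (C * l j + r j) :=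
        ENNReal.tsum_le_tsum fun j => hr j
    _ = ∑' j : {j // j ∉ A}, C * l j + ∑' j : {j // j ∉ A}, r j := ENNReal.tsum_add
    _ ≤ ε / 2 + ε / 2 := add_le_add hA
        ((ENNReal.tsum_comp_le_tsum_of_injective Subtype.val_injective r).trans hrs)
    _ = ε := ENNReal.add_halves ε

lemma cz_compact {E : Type*} (A : ℕ → Finset E) :
    IsCompact {μ : ProbVec E | ∀ m : ℕ, czTail (A m) μ ≤ ((m : ℝ≥0∞) + 1)⁻¹} := by
  rw [Subtype.isCompact_iff]
  have himg : ((↑) : ProbVec E → E → ℝ) ''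
      {μ : ProbVec E | ∀ m : ℕ, czTail (A m) μ ≤ ((m : ℝ≥0∞) + 1)⁻¹}
      = (Set.univ.pi fun _ => Set.Icc (0 : ℝ) 1) ∩
        ({p | ∀ s : Finset E, ∑ i ∈ s, p i ≤ 1} ∩
          {p | ∀ m : ℕ, 1 - ((m : ℝ) + 1)⁻¹ ≤ ∑ i ∈ A m, p i}) := by
    have hinv : ∀ m : ℕ, ((m : ℝ≥0∞) + 1)⁻¹ = ENNReal.ofReal (((m : ℝ) + 1)⁻¹) := by
      intro m
      rw [ENNReal.ofReal_inv_of_pos (by positivity), ENNReal.ofReal_add (by positivity) zero_le_one]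
      simp
    have hle1 : ∀ m : ℕ, ((m : ℝ) + 1)⁻¹ ≤ 1 := fun m => inv_le_one_of_one_le₀ (by simp)
    ext p
    constructor
    · rintro ⟨μ, hμ, rfl⟩
      refine ⟨fun i _ => ⟨μ.2.1 i, cz_le_one μ i⟩, fun s => sum_le_hasSum s
        (fun i _ => μ.2.1 i) μ.2.2, fun m => ?_⟩
      have h := czTail_add (A m) μ
      have h1 := hμ m
      rw [hinv] at h1
      have h2 : (1 : ℝ≥0∞) ≤ ENNReal.ofReal (∑ j ∈ A m, μ.1 j + ((m : ℝ) + 1)⁻¹) := by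
        rw [ENNReal.ofReal_add (Finset.sum_nonneg fun j _ => μ.2.1 j) (by positivity), ← h]
        gcongr
      rw [ENNReal.one_le_ofReal] at h2
      linarith
    · rintro ⟨h1, h2, h3⟩
      have hnn : ∀ i, 0 ≤ p i := fun i => (h1 i trivial).1
      have hs : Summable p := summable_of_sum_le hnn h2
      have htop : ∑' i, p i = 1 := by
        refine le_antisymm (hs.tsum_le_of_sum_le h2) ?_
        have ht : Tendsto (fun m : ℕ => 1 - ((m : ℝ) + 1)⁻¹) atTop (𝓝 (1 - 0)) := by
          refine tendsto_const_nhds.sub ?_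
          simpa [one_div] using tendsto_one_div_add_atTop_nhds_zero_nat (𝕜 := ℝ)
        rw [sub_zero] at ht
        exact le_of_tendsto' ht fun m => (h3 m).trans (hs.sum_le_tsum _ fun i _ => hnn i)
      refine ⟨⟨p, hnn, htop ▸ hs.hasSum⟩, fun m => ?_, rfl⟩
      have h := czTail_add (A m) ⟨p, hnn, htop ▸ hs.hasSum⟩
      have h4 := h3 m
      rw [hinv]
      have h5 : czTail (A m) ⟨p, hnn, htop ▸ hs.hasSum⟩
          = 1 - ENNReal.ofReal (∑ j ∈ A m, p j) :=
        ENNReal.eq_sub_of_add_eq ENNReal.ofReal_ne_top (by rw [add_comm]; exact h)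
      rw [h5, tsub_le_iff_right, ← ENNReal.ofReal_add (by positivity)
        (Finset.sum_nonneg fun j _ => hnn j), ENNReal.one_le_ofReal]
      linarith
  rw [himg]
  refine (isCompact_univ_pi fun _ => isCompact_Icc).inter_right (IsClosed.inter ?_ ?_)
  · simp only [Set.ofPred_forall]
    exact isClosed_iInter fun s => isClosed_le
      (continuous_finsetSum _ fun i _ => continuous_apply i) continuous_const
  · simp only [Set.ofPred_forall]
    exact isClosed_iInter fun s => isClosed_le continuous_const
      (continuous_finsetSum _ fun i _ => continuous_apply i)

lemma cz_meas_tail {E : Type*} [Countable E] (A : Finset E) :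
    Measurable (czTail A : ProbVec E → ℝ≥0∞) := by
  unfold czTail
  exact Measurable.tsum fun j =>
    ((measurable_pi_apply j.1).comp measurable_subtype_coe).ennreal_ofReal

lemma cz_tight {E : Type*} [Countable E] (S : Set (Measure (ProbVec E)))
    (hS : ∀ ε : ℝ≥0∞, ε ≠ 0 → ∃ A : Finset E, ∀ ν ∈ S, ∫⁻ μ, czTail A μ ∂ν ≤ ε) :
    IsTightMeasureSet S := by
  rw [isTightMeasureSet_iff_exists_isCompact_measure_compl_le]
  intro ε hε
  obtain ⟨δ, hδ0, hδ⟩ := ENNReal.exists_pos_sum_of_countable' hε.ne' ℕ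
  have hm : ∀ m : ℕ, ((m : ℝ≥0∞) + 1)⁻¹ ≠ 0 := fun m => by
    rw [Ne, ENNReal.inv_eq_zero]; finiteness
  have hm' : ∀ m : ℕ, ((m : ℝ≥0∞) + 1)⁻¹ ≠ ∞ := fun m => by
    rw [Ne, ENNReal.inv_eq_top]; simp
  choose A hA using fun m : ℕ => hS (δ m * ((m : ℝ≥0∞) + 1)⁻¹)
    (mul_ne_zero (hδ0 m).ne' (hm m))
  refine ⟨_, cz_compact A, fun ν hν => ?_⟩
  have hsub : {μ : ProbVec E | ∀ m : ℕ, czTail (A m) μ ≤ ((m : ℝ≥0∞) + 1)⁻¹}ᶜ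
      ⊆ ⋃ m : ℕ, {μ | ((m : ℝ≥0∞) + 1)⁻¹ ≤ czTail (A m) μ} := by
    intro μ hμ
    simp only [Set.mem_compl_iff, Set.mem_ofPred_eq, not_forall, not_le] at hμ
    obtain ⟨m, hm⟩ := hμ
    exact Set.mem_iUnion.2 ⟨m, hm.le⟩
  calc _ ≤ ν (⋃ m : ℕ, {μ | ((m : ℝ≥0∞) + 1)⁻¹ ≤ czTail (A m) μ}) := measure_mono hsub
    _ ≤ ∑' m : ℕ, ν {μ | ((m : ℝ≥0∞) + 1)⁻¹ ≤ czTail (A m) μ} := measure_iUnion_le _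
    _ ≤ ∑' m, δ m := by
      refine ENNReal.tsum_le_tsum fun m => ?_
      refine (meas_ge_le_lintegral_div (cz_meas_tail (A m)).aemeasurable (hm m) (hm' m)).trans ?_
      exact ENNReal.div_le_of_le_mul (hA m ν hν)
    _ ≤ ε := hδ.le

lemma cz_telescope (a : ℕ → ℝ) (n : ℕ) :
    ∑ k ∈ Finset.Icc 1 (n + 1), a (k + 1) - ∑ k ∈ Finset.Icc 1 (n + 1), a k
      = a (n + 2) - a 1 := by
  induction n with
  | zero => simp
  | succ n ih =>
    have h1 := Finset.sum_Icc_succ_top (a := 1) (b := n + 1) (by omega) (fun k => a (k + 1))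
    have h2 := Finset.sum_Icc_succ_top (a := 1) (b := n + 1) (by omega) a
    rw [h1, h2]
    linarith


/-- If the filter transition kernel `Π` has a unique invariant probability measure `𝕄`,
then the Cesàro averages of the laws of the filter converge weakly to `𝕄`:
`(1/n) ∑_{k=1}^n ∫ Π^k f d𝕄₀ → ∫ f d𝕄` for every bounded continuous `f`. -/
theorem cesaro_convergence_to_unique_invariant_measure
    {E : Type*} [Countable E] [Nonempty E] [DecidableEq E]
    {F : Type*} [TopologicalSpace F] [PolishSpace F] [MeasurableSpace F] [BorelSpace F]
    (φ : Measure F) [SigmaFinite φ]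
    (M : F → E → E → ℝ)
    (hMmeas : ∀ i j, Measurable fun y => M y i j)
    (hMnn : ∀ y i j, 0 ≤ M y i j)
    (hMbd : ∀ᵐ y ∂φ, ∃ C : ℝ, ∀ (i : E) (s : Finset E), ∑ j ∈ s, M y i j ≤ C)
    (hPtrans : ∀ i, HasSum (fun j => transMat M φ i j) 1)
    (hPirr : ∀ i j : E, ∃ n : ℕ, 0 < matPow (transMat M φ) n i j)
    (lam : ProbVec E)
    (hlamInv : ∀ j, ∑' i, (lam : E → ℝ) i * transMat M φ i j = (lam : E → ℝ) j)
    (hlamUniq : ∀ ρ : ProbVec E,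
      (∀ j, ∑' i, (ρ : E → ℝ) i * transMat M φ i j = (ρ : E → ℝ) j) → ρ = lam)
    (𝕄 : ProbabilityMeasure (ProbVec E)) (h𝕄 : IsPiInvariant M φ 𝕄)
    (huniq : ∀ 𝕄' : ProbabilityMeasure (ProbVec E), IsPiInvariant M φ 𝕄' → 𝕄' = 𝕄) :
    ∀ (𝕄₀ : ProbabilityMeasure (ProbVec E)) (f : ProbVec E → ℝ), IsBddCont f →
      Tendsto (fun n : ℕ => (n : ℝ)⁻¹ * ∑ k ∈ Finset.Icc 1 n,
          ∫ μ, ((filterKernel M φ)^[k] f) μ ∂(𝕄₀ : Measure (ProbVec E)))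
        atTop (nhds (∫ μ, f μ ∂(𝕄 : Measure (ProbVec E)))) := by
  intro 𝕄₀ f hf
  have hP0 : ∀ i j, 0 ≤ transMat M φ i j := fun i j => by
    rw [cz_transMat φ hMmeas hMnn]; exact ENNReal.toReal_nonneg
  have hP1 : ∀ i j, transMat M φ i j ≤ 1 := fun i j =>
    le_hasSum (hPtrans i) j (fun k _ => hP0 i k)
  have hfin := cz_finite φ M hMmeas hMnn hMbd hPtrans hPirr lam 𝕄 h𝕄
  have hp : ∀ i, ∑' j, czP M φ i j = 1 := fun i =>
    cz_row_one hMmeas hMnn hPtrans i (hfin i)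
  have hpos := cz_lam_pos hP0 hP1 hPirr lam hlamInv
  have hlinv : ∀ j, ∑' i, ENNReal.ofReal (lam.1 i) * czP M φ i j = ENNReal.ofReal (lam.1 j) := by
    intro j
    have hs : Summable fun i => lam.1 i * transMat M φ i j := lam.2.2.summable.of_nonneg_of_le
      (fun i => mul_nonneg (lam.2.1 i) (hP0 i j))
      (fun i => mul_le_of_le_one_right (lam.2.1 i) (hP1 i j))
    rw [← hlamInv j, ENNReal.ofReal_tsum_of_nonneg
      (fun i => mul_nonneg (lam.2.1 i) (hP0 i j)) hs]
    refine tsum_congr fun i => ?_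
    rw [ENNReal.ofReal_mul (lam.2.1 i), cz_transMat φ hMmeas hMnn, ENNReal.ofReal_toReal (hfin i j)]
  have hFel : ∀ g : ProbVec E → ℝ, IsBddCont g → IsBddCont (filterKernel M φ g) :=
    fun g hg => cz_feller φ hMmeas hMnn hMbd lam hp hg
  let κ := czKer φ hMmeas lam
  have hκM : ProbabilityTheory.IsMarkovKernel κ := ⟨fun μ => cz_prob φ hMmeas lam μ hp⟩
  let ν : ℕ → Measure (ProbVec E) := czLaw κ 𝕄₀
  have hνp : ∀ k, IsProbabilityMeasure (ν k) := fun k => czLaw_prob κ _ k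
  have hstep : ∀ g : ProbVec E → ℝ, IsBddCont g → ∀ k,
      ∫ μ, filterKernel M φ g μ ∂(ν k) = ∫ μ, g μ ∂(ν (k + 1)) := by
    intro g hg k
    obtain ⟨hgc, C, hC⟩ := hg
    have h1 := cz_int_bind κ (ν k) hgc.measurable hC
    refine Eq.trans ?_ h1.symm
    refine integral_congr_ae (ae_of_all _ fun μ => ?_)
    exact cz_int_meas φ hMmeas hMnn hMbd lam μ hgc
  have hiter : ∀ k, ∀ g : ProbVec E → ℝ, IsBddCont g →
      ∫ μ, ((filterKernel M φ)^[k] g) μ ∂(𝕄₀ : Measure (ProbVec E)) = ∫ μ, g μ ∂(ν k) := by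
    intro k
    induction k with
    | zero => intro g _; rfl
    | succ k ih =>
      intro g hg
      rw [Function.iterate_succ_apply, ih _ (hFel g hg), hstep g hg k]
  -- averages
  have hc : ∀ n : ℕ, ((n : ℝ≥0∞) + 1) ≠ 0 := fun n => by simp
  have hc' : ∀ n : ℕ, ((n : ℝ≥0∞) + 1) ≠ ∞ := fun n => by finiteness
  let Nm : ℕ → Measure (ProbVec E) := fun n =>
    ((n : ℝ≥0∞) + 1)⁻¹ • ∑ k ∈ Finset.Icc 1 (n + 1), ν k
  have hNp : ∀ n, IsProbabilityMeasure (Nm n) := by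
    intro n
    constructor
    simp only [Nm, Measure.smul_apply, Measure.finsetSum_apply, measure_univ, Finset.sum_const,
      Nat.card_Icc, smul_eq_mul, nsmul_eq_mul, mul_one]
    rw [Nat.add_sub_cancel]
    push_cast
    exact ENNReal.inv_mul_cancel (hc n) (hc' n)
  let N : ℕ → ProbabilityMeasure (ProbVec E) := fun n => ⟨Nm n, hNp n⟩
  have hNint : ∀ g : ProbVec E → ℝ, IsBddCont g → ∀ n,
      ∫ μ, g μ ∂(N n : Measure (ProbVec E))
        = ((n : ℝ) + 1)⁻¹ * ∑ k ∈ Finset.Icc 1 (n + 1), ∫ μ, g μ ∂(ν k) := by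
    intro g hg n
    obtain ⟨hgc, C, hC⟩ := hg
    change ∫ μ, g μ ∂(Nm n) = _
    simp only [Nm]
    rw [integral_smul_measure, integral_finsetSum_measure]
    · rw [ENNReal.toReal_inv, ENNReal.toReal_add (by simp) (by simp)]
      simp
    · intro k _
      exact Integrable.of_bound hgc.measurable.aestronglyMeasurable C (ae_of_all _ fun x => hC x)
  -- tightness
  have hcm : ∀ j, Measurable fun μ : ProbVec E => ENNReal.ofReal (μ.1 j) := fun j =>
    ((measurable_pi_apply j).comp measurable_subtype_coe).ennreal_ofReal
  have htight : IsTightMeasureSet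
      {((μ : ProbabilityMeasure (ProbVec E)) : Measure (ProbVec E)) | μ ∈ Set.range N} := by
    refine cz_tight _ fun ε hε => ?_
    obtain ⟨A, hA⟩ := cz_tail_uniform hp (l := fun i => ENNReal.ofReal (lam.1 i))
      (fun i => by simpa using hpos i) (fun i => ENNReal.ofReal_ne_top) (cz_tsum_one lam) hlinv
      (fun k j => ∫⁻ μ, ENNReal.ofReal (μ.1 j) ∂(ν k))
      (by
        rw [← lintegral_tsum (fun i => (hcm i).aemeasurable)]
        simp_rw [cz_tsum_one]
        simp)
      (by
        intro k j
        have h1 : ∫⁻ μ, ENNReal.ofReal (μ.1 j) ∂(ν (k + 1))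
            = ∫⁻ μ, ∫⁻ ρ, ENNReal.ofReal (ρ.1 j) ∂(κ μ) ∂(ν k) :=
          Measure.lintegral_bind κ.aemeasurable (hcm j).aemeasurable
        rw [h1]
        have h2 : ∀ μ, ∫⁻ ρ, ENNReal.ofReal (ρ.1 j) ∂(κ μ)
            = ∑' i, ENNReal.ofReal (μ.1 i) * czP M φ i j := fun μ =>
          cz_bary φ hMmeas hMnn hMbd lam μ j
        simp_rw [h2]
        rw [lintegral_tsum (fun i => ((hcm i).mul_const _).aemeasurable)]
        exact tsum_congr fun i => lintegral_mul_const _ (hcm i)) hε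
    refine ⟨A, ?_⟩
    rintro _ ⟨_, ⟨n, rfl⟩, rfl⟩
    change ∫⁻ μ, czTail A μ ∂(Nm n) ≤ ε
    simp only [Nm]
    rw [lintegral_smul_measure, lintegral_finsetSum_measure]
    have h1 : ∀ k, ∫⁻ μ, czTail A μ ∂(ν k) ≤ ε := by
      intro k
      unfold czTail
      have hm : ∀ j : {j // j ∉ A}, AEMeasurable
          (fun μ : ProbVec E => ENNReal.ofReal (μ.1 j.1)) (ν k) :=
        fun j => (hcm j.1).aemeasurable
      rw [lintegral_tsum hm]
      exact hA k
    calc _ ≤ ((n : ℝ≥0∞) + 1)⁻¹ • ∑ k ∈ Finset.Icc 1 (n + 1), ε := by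
          gcongr
          exact h1 _
      _ = ε := by
          simp only [Finset.sum_const, Nat.card_Icc, smul_eq_mul, nsmul_eq_mul]
          rw [Nat.add_sub_cancel, ← mul_assoc]
          push_cast
          rw [ENNReal.inv_mul_cancel (hc n) (hc' n), one_mul]
  have hcomp := isCompact_closure_of_isTightMeasureSet htight
  have hcontI : ∀ g : ProbVec E → ℝ, IsBddCont g → Continuous
      fun L : ProbabilityMeasure (ProbVec E) => ∫ μ, g μ ∂(L : Measure (ProbVec E)) := by
    rintro g ⟨hgc, C, hC⟩
    exact ProbabilityMeasure.continuous_integral_boundedContinuousFunction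
      (BoundedContinuousFunction.ofNormedAddCommGroup g hgc C (fun μ => hC μ))
  have hconv : Tendsto N atTop (𝓝 𝕄) := by
    refine hcomp.tendsto_nhds_of_unique_mapClusterPt
      (Eventually.of_forall fun n => subset_closure ⟨n, rfl⟩) fun L _ hL => huniq L fun g hg => ?_
    have hd : Continuous fun L : ProbabilityMeasure (ProbVec E) =>
        ∫ μ, filterKernel M φ g μ ∂(L : Measure (ProbVec E))
          - ∫ μ, g μ ∂(L : Measure (ProbVec E)) :=
      (hcontI _ (hFel g hg)).sub (hcontI g hg)
    have hcl := hL.tendsto_comp hd.continuousAt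
    have hval : ∀ n, ∫ μ, filterKernel M φ g μ ∂(N n : Measure (ProbVec E))
          - ∫ μ, g μ ∂(N n : Measure (ProbVec E))
        = ((n : ℝ) + 1)⁻¹ * (∫ μ, g μ ∂(ν (n + 2)) - ∫ μ, g μ ∂(ν 1)) := by
      intro n
      rw [hNint _ (hFel g hg), hNint g hg, ← mul_sub]
      congr 1
      simp_rw [hstep g hg]
      exact cz_telescope (fun k => ∫ μ, g μ ∂(ν k)) n
    obtain ⟨hgc, C, hC⟩ := hg
    have hbd : ∀ k, |∫ μ, g μ ∂(ν k)| ≤ C := by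
      intro k
      have := norm_integral_le_of_norm_le_const (μ := ν k) (f := g) (C := C)
        (ae_of_all _ fun ν => hC ν)
      simpa using this
    have hz : Tendsto (fun n : ℕ => ∫ μ, filterKernel M φ g μ ∂(N n : Measure (ProbVec E))
          - ∫ μ, g μ ∂(N n : Measure (ProbVec E))) atTop (𝓝 0) := by
      simp_rw [hval]
      have ht : Tendsto (fun n : ℕ => ((n : ℝ) + 1)⁻¹ * (2 * C)) atTop (𝓝 0) := by
        have := (tendsto_one_div_add_atTop_nhds_zero_nat (𝕜 := ℝ)).mul_const (2 * C)
        simpa [one_div] using this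
      refine squeeze_zero_norm (fun n => ?_) ht
      rw [norm_mul, Real.norm_of_nonneg (by positivity : (0 : ℝ) ≤ ((n : ℝ) + 1)⁻¹)]
      gcongr
      rw [Real.norm_eq_abs, abs_le]
      have h1 := abs_le.1 (hbd (n + 2))
      have h2 := abs_le.1 (hbd 1)
      constructor <;> linarith
    have h0 : (∫ μ, filterKernel M φ g μ ∂(L : Measure (ProbVec E))
          - ∫ μ, g μ ∂(L : Measure (ProbVec E))) = 0 := by
      have : ClusterPt _ (𝓝 (0 : ℝ)) := ClusterPt.mono hcl hz
      exact eq_of_nhds_neBot this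
    linarith
  rw [← tendsto_add_atTop_iff_nat 1]
  have hfinal := ((hcontI f hf).tendsto 𝕄).comp hconv
  refine hfinal.congr fun n => ?_
  simp only [Function.comp]
  rw [hNint f hf n]
  push_cast
  congr 1
  exact Finset.sum_congr rfl fun k _ => (hiter k f hf).symm
end

section
/- Suppose the signal transition matrix P is aperiodic and the filter transition kernel Π admits a unique Π-invariant probability measure 𝕄 on P(E). Then for every probability measure 𝕄₀ on P(E) and every bounded continuous function f : P(E) → ℝ, ∫ (Π^n f) d𝕄₀ → ∫ f d𝕄 as n → ∞, where Π^n f denotes the n-fold iterate Π(Π^{n−1} f) with Π^0 f = f. -/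
open MeasureTheory Filter Topology ENNReal

section PartOne
variable {E : Type*}

lemma pv_nonneg (μ : ProbVec E) (i : E) : 0 ≤ μ.1 i := μ.2.1 i
lemma pv_summable (μ : ProbVec E) : Summable μ.1 := μ.2.2.summable
lemma pv_tsum (μ : ProbVec E) : ∑' i, μ.1 i = 1 := μ.2.2.tsum_eq
lemma pv_le_one (μ : ProbVec E) (i : E) : μ.1 i ≤ 1 :=
  le_hasSum μ.2.2 i (fun j _ => μ.2.1 j)

lemma pv_ext {μ ν : ProbVec E} (h : ∀ i, μ.1 i = ν.1 i) : μ = ν :=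
  Subtype.ext (funext h)

lemma pv_tendsto_iff {ι : Type*} {l : Filter ι} {f : ι → ProbVec E} {μ : ProbVec E} :
    Tendsto f l (𝓝 μ) ↔ ∀ i, Tendsto (fun n => (f n).1 i) l (𝓝 (μ.1 i)) := by
  rw [tendsto_subtype_rng, tendsto_pi_nhds]

lemma pv_cont_coord (i : E) : Continuous (fun μ : ProbVec E => μ.1 i) :=
  (continuous_apply i).comp continuous_subtype_val

lemma pv_cont_iff {X : Type*} [TopologicalSpace X] {f : X → ProbVec E} :
    Continuous f ↔ ∀ i, Continuous (fun x => (f x).1 i) := by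
  constructor
  · intro h i; exact (pv_cont_coord i).comp h
  · intro h
    exact Continuous.subtype_mk (continuous_pi h) _

/-- overlap -/
lemma pv_overlap_tendsto {ι : Type*} {l : Filter ι} {f : ι → ProbVec E} {μ : ProbVec E}
    (h : Tendsto f l (𝓝 μ)) (q : ProbVec E) :
    Tendsto (fun n => ∑' i, min ((f n).1 i) (q.1 i)) l (𝓝 (∑' i, min (μ.1 i) (q.1 i))) := by
  rw [pv_tendsto_iff] at h
  refine tendsto_tsum_of_dominated_convergence (pv_summable q)
    (fun k => (h k).min tendsto_const_nhds) (Eventually.of_forall fun n k => ?_)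
  rw [Real.norm_of_nonneg (le_min (pv_nonneg _ _) (pv_nonneg _ _))]
  exact min_le_right _ _

lemma pv_overlap_summable (p q : ProbVec E) : Summable (fun i => min (p.1 i) (q.1 i)) :=
  Summable.of_nonneg_of_le (fun _ => le_min (pv_nonneg _ _) (pv_nonneg _ _))
    (fun _ => min_le_right _ _) (pv_summable q)

lemma pv_abs_summable (p q : ProbVec E) : Summable (fun i => |p.1 i - q.1 i|) :=
  ((pv_summable p).sub (pv_summable q)).abs

lemma pv_dist_eq (p q : ProbVec E) :
    ∑' i, |p.1 i - q.1 i| = 2 - 2 * ∑' i, min (p.1 i) (q.1 i) := by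
  have h : ∀ i, |p.1 i - q.1 i| = p.1 i + q.1 i - 2 * min (p.1 i) (q.1 i) := by
    intro i
    rcases le_total (p.1 i) (q.1 i) with h | h
    · rw [min_eq_left h, abs_of_nonpos (by linarith)]; ring
    · rw [min_eq_right h, abs_of_nonneg (by linarith)]; ring
  simp_rw [h]
  rw [((pv_summable p).add (pv_summable q)).tsum_sub ((pv_overlap_summable p q).mul_left 2),
    (pv_summable p).tsum_add (pv_summable q), tsum_mul_left, pv_tsum, pv_tsum]
  ring

lemma pv_scheffe {ι : Type*} {l : Filter ι} {f : ι → ProbVec E} {μ : ProbVec E}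
    (h : Tendsto f l (𝓝 μ)) : Tendsto (fun n => ∑' i, |(f n).1 i - μ.1 i|) l (𝓝 0) := by
  simp_rw [pv_dist_eq]
  have := ((pv_overlap_tendsto h μ).const_mul 2).const_sub 2
  simpa [min_self, pv_tsum] using this

lemma pv_mul_summable (μ : ProbVec E) {g : E → ℝ} {C : ℝ} (hg : ∀ i, |g i| ≤ C) :
    Summable (fun i => μ.1 i * g i) := by
  refine Summable.of_norm_bounded ((pv_summable μ).mul_right C) (fun i => ?_)
  rw [norm_mul, Real.norm_of_nonneg (pv_nonneg μ i)]
  exact mul_le_mul_of_nonneg_left (hg i) (pv_nonneg μ i)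

lemma pv_pair_diff (p q : ProbVec E) {g : E → ℝ} {C : ℝ} (hg : ∀ i, |g i| ≤ C) :
    |∑' i, p.1 i * g i - ∑' i, q.1 i * g i| ≤ C * ∑' i, |p.1 i - q.1 i| := by
  rw [← (pv_mul_summable p hg).tsum_sub (pv_mul_summable q hg), ← tsum_mul_left]
  have hb : ∀ i, ‖p.1 i * g i - q.1 i * g i‖ ≤ C * |p.1 i - q.1 i| := by
    intro i
    rw [← sub_mul, norm_mul, mul_comm, Real.norm_eq_abs, Real.norm_eq_abs]
    exact mul_le_mul_of_nonneg_right (hg i) (abs_nonneg _)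
  exact tsum_of_norm_bounded ((pv_abs_summable p q).mul_left C).hasSum hb

lemma pv_cont_pair {g : E → ℝ} {C : ℝ} (hg : ∀ i, |g i| ≤ C) :
    Continuous (fun μ : ProbVec E => ∑' i, μ.1 i * g i) := by
  rw [continuous_iff_continuousAt]
  intro μ
  have h0 := (pv_scheffe (tendsto_id (α := ProbVec E) (x := 𝓝 μ))).const_mul C
  rw [mul_zero] at h0
  refine tendsto_iff_norm_sub_tendsto_zero.2 ?_
  exact squeeze_zero (fun _ => norm_nonneg _) (fun p => pv_pair_diff p μ hg) h0

lemma tsum_swap {α β : Type*} (a : α → β → ℝ) (h0 : ∀ i j, 0 ≤ a i j) (r : α → ℝ)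
    (hr : ∀ i, HasSum (a i) (r i)) (hs : Summable r) :
    (∀ j, Summable (fun i => a i j)) ∧ HasSum (fun j => ∑' i, a i j) (∑' i, r i) := by
  have hp : Summable (fun x : α × β => a x.1 x.2) := by
    rw [summable_prod_of_nonneg (fun x => h0 _ _)]
    refine ⟨fun i => (hr i).summable, ?_⟩
    simpa [(hr _).tsum_eq] using hs
  have hp' : Summable (fun x : β × α => a x.2 x.1) := hp.prod_symm
  refine ⟨fun j => hp'.prod_factor j, ?_⟩
  have h1 : Summable (fun j => ∑' i, a i j) := hp'.prod
  have h2 : ∑' j, ∑' i, a i j = ∑' i, ∑' j, a i j := Summable.tsum_comm (f := fun i j => a i j) hp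
  have := h1.hasSum
  rw [h2] at this
  simpa [(hr _).tsum_eq] using this

def pvDelta [DecidableEq E] (i : E) : ProbVec E :=
  ⟨fun j => if i = j then 1 else 0, fun j => by dsimp only; split_ifs <;> norm_num, by
    simp_rw [eq_comm (a := i)]; exact hasSum_ite_eq i 1⟩

lemma pvDelta_pair [DecidableEq E] (i : E) (g : E → ℝ) : ∑' j, (pvDelta i).1 j * g j = g i := by
  simp [pvDelta]

instance pv_secondCountable [Countable E] : SecondCountableTopology (ProbVec E) :=
  (IsEmbedding.subtypeVal : IsEmbedding (Subtype.val : ProbVec E → E → ℝ)).secondCountableTopology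

instance pv_metrizable [Countable E] : TopologicalSpace.MetrizableSpace (ProbVec E) :=
  TopologicalSpace.metrizableSpace_of_t3_secondCountable _

end PartOne


section PartTwo
variable {E : Type*}

lemma pvStep_aux (P : E → E → ℝ) (h0 : ∀ i j, 0 ≤ P i j) (h1 : ∀ i, HasSum (P i) 1)
    (μ : ProbVec E) : (∀ j, Summable (fun i => μ.1 i * P i j)) ∧
      HasSum (fun j => ∑' i, μ.1 i * P i j) 1 := by
  have := tsum_swap (fun i j => μ.1 i * P i j) (fun i j => mul_nonneg (pv_nonneg μ i) (h0 i j))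
    (fun i => μ.1 i * 1) (fun i => (h1 i).mul_left _) (by simpa using pv_summable μ)
  refine ⟨this.1, ?_⟩
  simpa [pv_tsum] using this.2

noncomputable def pvStep (P : E → E → ℝ) (h0 : ∀ i j, 0 ≤ P i j) (h1 : ∀ i, HasSum (P i) 1)
    (μ : ProbVec E) : ProbVec E :=
  ⟨fun j => ∑' i, μ.1 i * P i j,
    fun j => tsum_nonneg (fun i => mul_nonneg (pv_nonneg μ i) (h0 i j)),
    (pvStep_aux P h0 h1 μ).2⟩

lemma stoch_le_one (P : E → E → ℝ) (h0 : ∀ i j, 0 ≤ P i j) (h1 : ∀ i, HasSum (P i) 1) (i j : E) :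
    |P i j| ≤ 1 := by
  rw [abs_of_nonneg (h0 i j)]
  exact le_hasSum (h1 i) j (fun k _ => h0 i k)

lemma pvStep_cont (P : E → E → ℝ) (h0 : ∀ i j, 0 ≤ P i j) (h1 : ∀ i, HasSum (P i) 1) :
    Continuous (pvStep P h0 h1) := by
  rw [pv_cont_iff]
  intro j
  exact pv_cont_pair (fun i => stoch_le_one P h0 h1 i j)

variable [DecidableEq E]

lemma pvStep_iter_delta (P : E → E → ℝ) (h0 : ∀ i j, 0 ≤ P i j) (h1 : ∀ i, HasSum (P i) 1)
    (n : ℕ) (i j : E) : ((pvStep P h0 h1)^[n] (pvDelta i)).1 j = matPow P n i j := by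
  induction n generalizing j with
  | zero => rfl
  | succ n ih =>
    rw [Function.iterate_succ_apply']
    simp only [pvStep, matPow]
    exact tsum_congr (fun k => by rw [← ih k])

lemma pvStep_iter_apply (P : E → E → ℝ) (h0 : ∀ i j, 0 ≤ P i j) (h1 : ∀ i, HasSum (P i) 1)
    (n : ℕ) (μ : ProbVec E) (j : E) :
    ((pvStep P h0 h1)^[n] μ).1 j = ∑' i, μ.1 i * matPow P n i j := by
  induction n generalizing j with
  | zero =>
    simp only [Function.iterate_zero, id, matPow]
    simp
  | succ n ih =>
    rw [Function.iterate_succ_apply']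
    simp only [pvStep, matPow]
    have e1 : ∀ k, ((pvStep P h0 h1)^[n] μ).1 k * P k j
        = ∑' i, μ.1 i * (matPow P n i k * P k j) := by
      intro k
      rw [ih k, ← tsum_mul_right]
      exact tsum_congr fun i => by ring
    have hm : ∀ i k, 0 ≤ matPow P n i k := fun i k => by
      rw [← pvStep_iter_delta P h0 h1]; exact pv_nonneg _ _
    have hs : ∀ i, HasSum (fun k => matPow P n i k * P k j) (matPow P (n+1) i j) := by
      intro i
      have := (pvStep_aux P h0 h1 ((pvStep P h0 h1)^[n] (pvDelta i))).1 j
      simp only [pvStep_iter_delta] at this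
      exact this.hasSum
    have hb : ∀ i, |matPow P (n+1) i j| ≤ 1 := fun i => by
      rw [← pvStep_iter_delta P h0 h1, abs_of_nonneg (pv_nonneg _ _)]; exact pv_le_one _ _
    have := (tsum_swap (fun i k => μ.1 i * (matPow P n i k * P k j))
      (fun i k => mul_nonneg (pv_nonneg _ _) (mul_nonneg (hm _ _) (h0 _ _)))
      (fun i => μ.1 i * matPow P (n+1) i j) (fun i => (hs i).mul_left _)
      (pv_mul_summable μ hb)).2.tsum_eq
    calc _ = ∑' k, ∑' i, μ.1 i * (matPow P n i k * P k j) := tsum_congr e1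
      _ = _ := this

lemma matPow_nonneg' (P : E → E → ℝ) (h0 : ∀ i j, 0 ≤ P i j) (h1 : ∀ i, HasSum (P i) 1)
    (n : ℕ) (i j : E) : 0 ≤ matPow P n i j := by
  rw [← pvStep_iter_delta P h0 h1]; exact pv_nonneg _ _

lemma matPow_le_one' (P : E → E → ℝ) (h0 : ∀ i j, 0 ≤ P i j) (h1 : ∀ i, HasSum (P i) 1)
    (n : ℕ) (i j : E) : |matPow P n i j| ≤ 1 := by
  rw [abs_of_nonneg (matPow_nonneg' P h0 h1 n i j), ← pvStep_iter_delta P h0 h1]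
  exact pv_le_one _ _

lemma matPow_summable (P : E → E → ℝ) (h0 : ∀ i j, 0 ≤ P i j) (h1 : ∀ i, HasSum (P i) 1)
    (n : ℕ) (μ : ProbVec E) (j : E) : Summable fun i => μ.1 i * matPow P n i j :=
  pv_mul_summable μ (fun i => matPow_le_one' P h0 h1 n i j)

lemma matPow_term_le (P : E → E → ℝ) (h0 : ∀ i j, 0 ≤ P i j) (h1 : ∀ i, HasSum (P i) 1)
    (n : ℕ) (μ : ProbVec E) (i j : E) :
    μ.1 i * matPow P n i j ≤ ((pvStep P h0 h1)^[n] μ).1 j := by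
  rw [pvStep_iter_apply]
  exact (matPow_summable P h0 h1 n μ j).le_tsum i
    (fun k _ => mul_nonneg (pv_nonneg _ _) (matPow_nonneg' P h0 h1 _ _ _))

lemma matPow_pos_large (P : E → E → ℝ) (h0 : ∀ i j, 0 ≤ P i j) (h1 : ∀ i, HasSum (P i) 1)
    (hirr : ∀ i j : E, ∃ n : ℕ, 0 < matPow P n i j)
    (hAper : ∀ i : E, ∃ N : ℕ, ∀ n ≥ N, 0 < matPow P n i i) (i j : E) :
    ∃ N, ∀ n ≥ N, 0 < matPow P n i j := by
  obtain ⟨m, hm⟩ := hirr i j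
  obtain ⟨N, hN⟩ := hAper j
  refine ⟨N + m, fun n hn => ?_⟩
  obtain ⟨k, rfl⟩ : ∃ k, n = k + m := ⟨n - m, by omega⟩
  have h2 := matPow_term_le P h0 h1 k ((pvStep P h0 h1)^[m] (pvDelta i)) j j
  rw [← Function.iterate_add_apply, pvStep_iter_delta, pvStep_iter_delta] at h2
  exact lt_of_lt_of_le (mul_pos hm (hN k (by omega))) h2

lemma lam_pos (P : E → E → ℝ) (h0 : ∀ i j, 0 ≤ P i j) (h1 : ∀ i, HasSum (P i) 1)
    (hirr : ∀ i j : E, ∃ n : ℕ, 0 < matPow P n i j) (lam : ProbVec E)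
    (hinv : pvStep P h0 h1 lam = lam) (j : E) : 0 < lam.1 j := by
  have : ∃ i, 0 < lam.1 i := by
    by_contra hcon
    push Not at hcon
    have hz : ∀ i, lam.1 i = 0 := fun i => le_antisymm (hcon i) (pv_nonneg _ _)
    have := pv_tsum lam
    simp [hz] at this
  obtain ⟨i, hi⟩ := this
  obtain ⟨n, hn⟩ := hirr i j
  have h2 := matPow_term_le P h0 h1 n lam i j
  rw [Function.iterate_fixed hinv] at h2
  exact lt_of_lt_of_le (mul_pos hi hn) h2

lemma pv_dom_compact (lam : ProbVec E) (C : ℝ) :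
    IsCompact {p : ProbVec E | ∀ j, p.1 j ≤ C * lam.1 j} := by
  rw [IsEmbedding.subtypeVal.isCompact_iff]
  let B : Set (E → ℝ) := Set.pi Set.univ (fun j => Set.Icc 0 (C * lam.1 j))
  have hB : IsCompact B := isCompact_univ_pi (fun j => isCompact_Icc)
  have hc : ContinuousOn (fun q : E → ℝ => ∑' j, q j) B := by
    intro q _
    refine tendsto_tsum_of_dominated_convergence ((pv_summable lam).mul_left C)
      (fun k => ((continuous_apply k).tendsto q).mono_left nhdsWithin_le_nhds) ?_
    filter_upwards [self_mem_nhdsWithin] with p hp k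
    have := hp k (Set.mem_univ k)
    rw [Real.norm_of_nonneg this.1]; exact this.2
  have hcl := hc.preimage_isClosed_of_isClosed hB.isClosed (isClosed_singleton (x := (1:ℝ)))
  have himg : (Subtype.val '' {p : ProbVec E | ∀ j, p.1 j ≤ C * lam.1 j})
      = B ∩ (fun q : E → ℝ => ∑' j, q j) ⁻¹' {1} := by
    ext q
    constructor
    · rintro ⟨p, hp, rfl⟩
      exact ⟨fun j _ => ⟨pv_nonneg p j, hp j⟩, pv_tsum p⟩
    · rintro ⟨hq, hs⟩
      have hsum : Summable q := Summable.of_nonneg_of_le (fun j => (hq j trivial).1)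
        (fun j => (hq j trivial).2) ((pv_summable lam).mul_left C)
      refine ⟨⟨q, fun j => (hq j trivial).1, ?_⟩, fun j => (hq j trivial).2, rfl⟩
      have := hsum.hasSum
      rwa [show ∑' j, q j = 1 from hs] at this
  rw [himg]
  exact hB.of_isClosed_subset hcl Set.inter_subset_left

/-- overlap is monotone, strictly on large times -/
lemma overlap_step (P : E → E → ℝ) (h0 : ∀ i j, 0 ≤ P i j) (h1 : ∀ i, HasSum (P i) 1)
    (n : ℕ) (p q : ProbVec E) (a b j₀ : E) (ha : q.1 a ≤ p.1 a) (hb : p.1 b ≤ q.1 b) :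
    ∑' i, min (p.1 i) (q.1 i) +
      min ((p.1 a - q.1 a) * matPow P n a j₀) ((q.1 b - p.1 b) * matPow P n b j₀) ≤
    ∑' i, min (((pvStep P h0 h1)^[n] p).1 i) (((pvStep P h0 h1)^[n] q).1 i) := by
  have hm0 : ∀ i, 0 ≤ min (p.1 i) (q.1 i) := fun i => le_min (pv_nonneg _ _) (pv_nonneg _ _)
  have hrow : ∀ i, HasSum (matPow P n i) 1 := fun i => by
    have := ((pvStep P h0 h1)^[n] (pvDelta i)).2.2
    have e : ((pvStep P h0 h1)^[n] (pvDelta i)).1 = matPow P n i :=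
      funext fun j => pvStep_iter_delta P h0 h1 n i j
    rwa [e] at this
  have hsw := tsum_swap (fun i j => min (p.1 i) (q.1 i) * matPow P n i j)
    (fun i j => mul_nonneg (hm0 i) (matPow_nonneg' P h0 h1 _ _ _))
    (fun i => min (p.1 i) (q.1 i) * 1) (fun i => (hrow i).mul_left _)
    (by simpa using pv_overlap_summable p q)
  simp only [mul_one] at hsw
  set c := min ((p.1 a - q.1 a) * matPow P n a j₀) ((q.1 b - p.1 b) * matPow P n b j₀) with hc
  have hsum2 : HasSum (fun j => (∑' i, min (p.1 i) (q.1 i) * matPow P n i j) +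
      if j = j₀ then c else 0) (∑' i, min (p.1 i) (q.1 i) + c) :=
    hsw.2.add (hasSum_ite_eq j₀ c)
  have key : ∀ (r : ProbVec E) (e : E) (j : E), min (p.1 e) (q.1 e) ≤ r.1 e →
      (∀ i, min (p.1 i) (q.1 i) ≤ r.1 i) →
      (∑' i, min (p.1 i) (q.1 i) * matPow P n i j) +
        (r.1 e - min (p.1 e) (q.1 e)) * matPow P n e j ≤ ((pvStep P h0 h1)^[n] r).1 j := by
    intro r e j _ hr
    rw [pvStep_iter_apply]
    have hs1 := hsw.1 j
    have hs2 := matPow_summable P h0 h1 n r j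
    have hs3 := (hs2.sub hs1)
    have := hs3.le_tsum e (fun k _ => by
      have := mul_le_mul_of_nonneg_right (hr k) (matPow_nonneg' P h0 h1 n k j)
      linarith)
    rw [hs2.tsum_sub hs1] at this
    linarith
  refine hasSum_le (fun j => ?_) hsum2 (pv_overlap_summable _ _).hasSum
  have k1 := key p a j (min_le_left _ _) (fun i => min_le_left _ _)
  have k2 := key q b j (min_le_right _ _) (fun i => min_le_right _ _)
  rw [min_eq_right ha] at k1
  rw [min_eq_left hb] at k2
  have n1 : 0 ≤ (p.1 a - q.1 a) * matPow P n a j :=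
    mul_nonneg (by linarith) (matPow_nonneg' P h0 h1 _ _ _)
  have n2 : 0 ≤ (q.1 b - p.1 b) * matPow P n b j :=
    mul_nonneg (by linarith) (matPow_nonneg' P h0 h1 _ _ _)
  apply le_min
  · split_ifs with h
    · subst h
      have := min_le_left ((p.1 a - q.1 a) * matPow P n a j) ((q.1 b - p.1 b) * matPow P n b j)
      rw [← hc] at this; linarith
    · linarith
  · split_ifs with h
    · subst h
      have := min_le_right ((p.1 a - q.1 a) * matPow P n a j) ((q.1 b - p.1 b) * matPow P n b j)
      rw [← hc] at this; linarith
    · linarith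

lemma pv_ne_exists {p q : ProbVec E} (h : p ≠ q) : ∃ a, q.1 a < p.1 a := by
  by_contra hcon
  push Not at hcon
  apply h
  have hz := hasSum_zero_iff_of_nonneg (L := .unconditional E) (f := fun i => q.1 i - p.1 i)
    (fun i => by simpa using hcon i)
  have := (q.2.2.sub p.2.2)
  rw [sub_self] at this
  have := hz.1 this
  exact pv_ext fun i => by have := congrFun this i; simp at this; linarith

lemma overlap_mono (P : E → E → ℝ) (h0 : ∀ i j, 0 ≤ P i j) (h1 : ∀ i, HasSum (P i) 1)
    (p lam : ProbVec E) (hinv : pvStep P h0 h1 lam = lam) :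
    ∑' i, min (p.1 i) (lam.1 i) ≤ ∑' i, min ((pvStep P h0 h1 p).1 i) (lam.1 i) := by
  by_cases h : p = lam
  · subst h; rw [hinv]
  · obtain ⟨a, ha⟩ := pv_ne_exists h
    obtain ⟨b, hb⟩ := pv_ne_exists (Ne.symm h)
    have := overlap_step P h0 h1 1 p lam a b a ha.le hb.le
    simp only [Function.iterate_one, hinv] at this
    have h2 : 0 ≤ min ((p.1 a - lam.1 a) * matPow P 1 a a) ((lam.1 b - p.1 b) * matPow P 1 b a) :=
      le_min (mul_nonneg (by linarith) (matPow_nonneg' P h0 h1 _ _ _))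
        (mul_nonneg (by linarith) (matPow_nonneg' P h0 h1 _ _ _))
    linarith

lemma markov_conv_dom (P : E → E → ℝ) (h0 : ∀ i j, 0 ≤ P i j) (h1 : ∀ i, HasSum (P i) 1)
    (hirr : ∀ i j : E, ∃ n : ℕ, 0 < matPow P n i j)
    (hAper : ∀ i : E, ∃ N : ℕ, ∀ n ≥ N, 0 < matPow P n i i) (lam : ProbVec E)
    (hinv : pvStep P h0 h1 lam = lam) (μ : ProbVec E) (C : ℝ) (hC : ∀ j, μ.1 j ≤ C * lam.1 j) :
    Tendsto (fun n => (pvStep P h0 h1)^[n] μ) atTop (𝓝 lam) := by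
  set T := pvStep P h0 h1 with hT
  let V : ProbVec E → ℝ := fun p => ∑' i, min (p.1 i) (lam.1 i)
  have hVc : Continuous V := continuous_iff_continuousAt.2 fun p =>
    pv_overlap_tendsto (tendsto_id (x := 𝓝 p)) lam
  have hmono : Monotone (fun n => V (T^[n] μ)) := monotone_nat_of_le_succ fun n => by
    rw [Function.iterate_succ_apply']
    exact overlap_mono P h0 h1 _ lam hinv
  have hV1 : ∀ p, V p ≤ 1 := fun p => by
    have := (pv_overlap_summable p lam).tsum_le_tsum (fun i => min_le_right _ _) (pv_summable lam)
    rwa [pv_tsum] at this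
  obtain ⟨c, hc⟩ : ∃ c, Tendsto (fun n => V (T^[n] μ)) atTop (𝓝 c) :=
    ⟨_, tendsto_atTop_ciSup hmono ⟨1, by rintro _ ⟨n, rfl⟩; exact hV1 _⟩⟩
  have hK := pv_dom_compact lam C
  have hmem : ∀ n, T^[n] μ ∈ {p : ProbVec E | ∀ j, p.1 j ≤ C * lam.1 j} := by
    intro n
    induction n with
    | zero => exact hC
    | succ n ih =>
      intro j
      rw [Function.iterate_succ_apply']
      have e : lam.1 j = ∑' i, lam.1 i * P i j := by
        conv_lhs => rw [← hinv]
        rfl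
      rw [e, ← tsum_mul_left]
      refine (pvStep_aux P h0 h1 _).1 j |>.tsum_le_tsum (fun i => ?_)
        (((pvStep_aux P h0 h1 lam).1 j).mul_left C)
      have := mul_le_mul_of_nonneg_right (ih i) (h0 i j)
      linarith
  refine hK.le_nhds_of_unique_clusterPt (Filter.eventually_map.2 (Eventually.of_forall hmem)) ?_
  intro w _ hw
  by_contra hne
  have hTk : ∀ k, Continuous (T^[k]) := fun k => (pvStep_cont P h0 h1).iterate k
  have hconst : ∀ k, V (T^[k] w) = c := by
    intro k
    have h3 : MapClusterPt (V (T^[k] w)) atTop (fun n => V (T^[k] (T^[n] μ))) :=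
      MapClusterPt.continuousAt_comp (f := fun p => V (T^[k] p))
        (hVc.comp (hTk k)).continuousAt hw
    have h4 : Tendsto (fun n => V (T^[k] (T^[n] μ))) atTop (𝓝 c) := by
      simp_rw [← Function.iterate_add_apply]
      exact hc.comp (tendsto_atTop_mono (fun n => Nat.le_add_left n k) tendsto_id)
    by_contra hn
    obtain ⟨u, v, hu, hv, huv⟩ := t2_separation_nhds hn
    have f1 := h3.frequently hu
    have f2 := h4.eventually hv
    obtain ⟨n, hn1, hn2⟩ := (f1.and_eventually f2).exists
    exact Set.disjoint_left.1 huv hn1 hn2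
  obtain ⟨a, ha⟩ := pv_ne_exists hne
  obtain ⟨b, hb⟩ := pv_ne_exists (Ne.symm hne)
  obtain ⟨N1, hN1⟩ := matPow_pos_large P h0 h1 hirr hAper a a
  obtain ⟨N2, hN2⟩ := matPow_pos_large P h0 h1 hirr hAper b a
  have hs := overlap_step P h0 h1 (max N1 N2) w lam a b a ha.le hb.le
  rw [Function.iterate_fixed hinv] at hs
  have hpos := lt_min (mul_pos (sub_pos.2 ha) (hN1 (max N1 N2) (le_max_left _ _)))
    (mul_pos (sub_pos.2 hb) (hN2 (max N1 N2) (le_max_right _ _)))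
  have e1 := hconst 0
  have e2 := hconst (max N1 N2)
  simp only [Function.iterate_zero, id] at e1
  simp only [V] at e1 e2
  rw [← hT] at hs
  linarith

lemma markov_conv (P : E → E → ℝ) (h0 : ∀ i j, 0 ≤ P i j) (h1 : ∀ i, HasSum (P i) 1)
    (hirr : ∀ i j : E, ∃ n : ℕ, 0 < matPow P n i j)
    (hAper : ∀ i : E, ∃ N : ℕ, ∀ n ≥ N, 0 < matPow P n i i) (lam : ProbVec E)
    (hinv : pvStep P h0 h1 lam = lam) (μ : ProbVec E) :
    Tendsto (fun n => (pvStep P h0 h1)^[n] μ) atTop (𝓝 lam) := by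
  rw [pv_tendsto_iff]
  intro j
  simp_rw [pvStep_iter_apply]
  have e : lam.1 j = ∑' i, μ.1 i * lam.1 j := by rw [tsum_mul_right, pv_tsum, one_mul]
  rw [e]
  refine tendsto_tsum_of_dominated_convergence (pv_summable μ) (fun i => ?_)
    (Eventually.of_forall fun n i => ?_)
  · refine Tendsto.const_mul _ ?_
    have hp := lam_pos P h0 h1 hirr lam hinv i
    have := markov_conv_dom P h0 h1 hirr hAper lam hinv (pvDelta i) (lam.1 i)⁻¹ (fun k => by
      by_cases h : i = k
      · subst h; simp [pvDelta, inv_mul_cancel₀ hp.ne']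
      · simp only [pvDelta, h, if_false]
        exact mul_nonneg (inv_nonneg.2 hp.le) (pv_nonneg _ _))
    have := pv_tendsto_iff.1 this j
    simpa only [pvStep_iter_delta] using this
  · rw [norm_mul, Real.norm_of_nonneg (pv_nonneg _ _)]
    have := matPow_le_one' P h0 h1 n i j
    exact mul_le_of_le_one_right (pv_nonneg _ _) this

end PartTwo


section PartThree
open BoundedContinuousFunction

abbrev SubVec (E : Type*) := {p : E → ℝ // (∀ i, 0 ≤ p i) ∧ ∀ s : Finset E, ∑ i ∈ s, p i ≤ 1}

variable {E : Type*}

lemma subVec_le_one (p : SubVec E) (i : E) : p.1 i ≤ 1 := by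
  simpa using p.2.2 {i}

lemma subVec_compact : CompactSpace (SubVec E) := by
  refine (isCompact_iff_compactSpace (s := {p : E → ℝ | (∀ i, 0 ≤ p i) ∧
    ∀ s : Finset E, ∑ i ∈ s, p i ≤ 1})).1 ?_
  have hB : IsCompact (Set.pi Set.univ (fun _ : E => Set.Icc (0:ℝ) 1)) :=
    isCompact_univ_pi (fun _ => isCompact_Icc)
  refine hB.of_isClosed_subset ?_ ?_
  · have e : {p : E → ℝ | (∀ i, 0 ≤ p i) ∧ ∀ s : Finset E, ∑ i ∈ s, p i ≤ 1}
      = (⋂ i, {p | 0 ≤ p i}) ∩ ⋂ s : Finset E, {p | ∑ i ∈ s, p i ≤ 1} := by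
      ext p; simp
    rw [e]
    refine IsClosed.inter (isClosed_iInter fun i => ?_) (isClosed_iInter fun s => ?_)
    · exact isClosed_le continuous_const (continuous_apply i)
    · exact isClosed_le (continuous_finsetSum _ fun i _ => continuous_apply i) continuous_const
  · intro p hp i _
    exact ⟨hp.1 i, subVec_le_one ⟨p, hp⟩ i⟩

def toSub (μ : ProbVec E) : SubVec E :=
  ⟨μ.1, μ.2.1, fun s => sum_le_hasSum s (fun i _ => μ.2.1 i) μ.2.2⟩

lemma toSub_emb : IsEmbedding (toSub : ProbVec E → SubVec E) := by
  have h : IsEmbedding (Subtype.val ∘ (toSub : ProbVec E → SubVec E)) :=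
    (IsEmbedding.subtypeVal : IsEmbedding (Subtype.val : ProbVec E → E → ℝ))
  exact h.of_comp (Continuous.subtype_mk continuous_subtype_val _) continuous_subtype_val

lemma hoac_of_metrizable {X : Type*} [TopologicalSpace X] [TopologicalSpace.PseudoMetrizableSpace X] :
    HasOuterApproxClosed X := by
  let := TopologicalSpace.pseudoMetrizableSpacePseudoMetric X
  infer_instance

lemma toSub_cont : Continuous (toSub : ProbVec E → SubVec E) := toSub_emb.continuous

/-- exponential test functions -/
noncomputable def expL (a : E →₀ ℝ) (p : E → ℝ) : ℝ := Real.exp (a.sum fun i c => c * p i)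

lemma expL_cont (a : E →₀ ℝ) : Continuous (expL a) := by
  unfold expL Finsupp.sum
  fun_prop

lemma expL_zero (p : E → ℝ) : expL 0 p = 1 := by simp [expL]

lemma expL_add (a b : E →₀ ℝ) (p : E → ℝ) : expL (a + b) p = expL a p * expL b p := by
  unfold expL
  rw [← Real.exp_add, Finsupp.sum_add_index']
  · simp
  · intros; ring

noncomputable def expLb (a : E →₀ ℝ) : SubVec E →ᵇ ℝ :=
  have : CompactSpace (SubVec E) := subVec_compact
  BoundedContinuousFunction.mkOfCompact
    ⟨fun p => expL a p.1, (expL_cont a).comp continuous_subtype_val⟩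

lemma expLb_apply (a : E →₀ ℝ) (p : SubVec E) : expLb a p = expL a p.1 := rfl

noncomputable def expM : Submonoid (SubVec E →ᵇ ℝ) where
  carrier := Set.range expLb
  one_mem' := ⟨0, by ext p; exact expL_zero _⟩
  mul_mem' := by
    rintro _ _ ⟨a, rfl⟩ ⟨b, rfl⟩
    exact ⟨a + b, by ext p; exact expL_add _ _ _⟩

variable [Countable E]

instance sv_secondCountable : SecondCountableTopology (SubVec E) :=
  (IsEmbedding.subtypeVal : IsEmbedding (Subtype.val : SubVec E → E → ℝ)).secondCountableTopology

instance sv_metrizable : TopologicalSpace.MetrizableSpace (SubVec E) :=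
  TopologicalSpace.metrizableSpace_of_t3_secondCountable _

instance sv_polish : PolishSpace (SubVec E) := by
  have : CompactSpace (SubVec E) := subVec_compact
  refine IsClosedEmbedding.polishSpace (f := (Subtype.val : SubVec E → E → ℝ)) ?_
  exact continuous_subtype_val.isClosedEmbedding Subtype.val_injective

lemma subVec_ext_measure (Q Q' : ProbabilityMeasure (SubVec E))
    (h : ∀ a, ∫ p, expLb a p ∂(Q : Measure (SubVec E)) = ∫ p, expLb a p ∂(Q' : Measure (SubVec E))) :
    Q = Q' := by
  have : CompactSpace (SubVec E) := subVec_compact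
  apply Subtype.ext
  change (Q : Measure (SubVec E)) = (Q' : Measure (SubVec E))
  let A0 : Subalgebra ℝ (SubVec E →ᵇ ℝ) := Algebra.adjoin ℝ ((expM : Submonoid (SubVec E →ᵇ ℝ)) : Set (SubVec E →ᵇ ℝ))
  let A : StarSubalgebra ℝ (SubVec E →ᵇ ℝ) :=
    { A0 with
      star_mem' := by
        intro a ha
        have : star a = a := by ext x; simp
        rw [this]; exact ha }
  have hspan : ∀ g ∈ A, g ∈ Submodule.span ℝ ((expM : Submonoid (SubVec E →ᵇ ℝ)) : Set (SubVec E →ᵇ ℝ)) := by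
    intro g hg
    have hg' : g ∈ Subalgebra.toSubmodule A0 := hg
    rwa [Algebra.adjoin_eq_span, Submonoid.closure_eq] at hg'
  refine ext_of_forall_mem_subalgebra_integral_eq_of_polish (𝕜 := ℝ) (A := A) ?_ ?_
  · intro p q hpq
    have : ∃ i, p.1 i ≠ q.1 i := by
      by_contra hcon
      push Not at hcon
      exact hpq (Subtype.ext (funext hcon))
    obtain ⟨i, hi⟩ := this
    refine ⟨_, ⟨(expLb (Finsupp.single i 1)).toContinuousMap, ⟨expLb (Finsupp.single i 1),
      Algebra.subset_adjoin ⟨_, rfl⟩, rfl⟩, rfl⟩, ?_⟩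
    change expL _ p.1 ≠ expL _ q.1
    simpa [expL] using hi
  · intro g hg
    refine Submodule.span_induction (p := fun g _ => ∫ x, g x ∂(Q : Measure (SubVec E))
      = ∫ x, g x ∂(Q' : Measure (SubVec E))) ?_ ?_ ?_ ?_ (hspan g hg)
    · rintro _ ⟨a, rfl⟩
      exact h a
    · simp
    · intro x y _ _ hx hy
      simp only [BoundedContinuousFunction.coe_add, Pi.add_apply]
      rw [integral_add (x.integrable _) (y.integrable _), integral_add (x.integrable _)
        (y.integrable _), hx, hy]
    · intro c x _ hx
      simp only [BoundedContinuousFunction.coe_smul]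
      rw [integral_smul, integral_smul, hx]

noncomputable def pushSub (ν : ProbabilityMeasure (ProbVec E)) : ProbabilityMeasure (SubVec E) :=
  ν.map toSub_cont.measurable.aemeasurable

lemma pushSub_integral (ν : ProbabilityMeasure (ProbVec E)) (f : SubVec E → ℝ) (hf : Continuous f) :
    ∫ p, f p ∂(pushSub ν : Measure (SubVec E)) = ∫ μ, f (toSub μ) ∂(ν : Measure (ProbVec E)) := by
  unfold pushSub
  rw [ProbabilityMeasure.toMeasure_map]
  exact integral_map toSub_cont.measurable.aemeasurable hf.measurable.aestronglyMeasurable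

lemma clusterPt_integral {X : Type*} [TopologicalSpace X] [MeasurableSpace X] [OpensMeasurableSpace X]
    {u : ℕ → ProbabilityMeasure X} {Q : ProbabilityMeasure X} (hQ : MapClusterPt Q atTop u)
    (f : X →ᵇ ℝ) {c : ℝ} (hc : Tendsto (fun n => ∫ x, f x ∂(u n : Measure X)) atTop (𝓝 c)) :
    ∫ x, f x ∂(Q : Measure X) = c := by
  have h3 : MapClusterPt (∫ x, f x ∂(Q : Measure X)) atTop (fun n => ∫ x, f x ∂(u n : Measure X)) :=
    MapClusterPt.continuousAt_comp (f := fun ν : ProbabilityMeasure X => ∫ x, f x ∂(ν : Measure X))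
      (ProbabilityMeasure.continuous_integral_boundedContinuousFunction f).continuousAt hQ
  by_contra hn
  obtain ⟨s, v, hu, hv, huv⟩ := t2_separation_nhds hn
  obtain ⟨n, hn1, hn2⟩ := ((h3.frequently hu).and_eventually (hc.eventually hv)).exists
  exact Set.disjoint_left.1 huv hn1 hn2

lemma weak_conv_of_exp {ν : ℕ → ProbabilityMeasure (ProbVec E)} {ν' : ProbabilityMeasure (ProbVec E)}
    (h : ∀ a : E →₀ ℝ, Tendsto (fun n => ∫ μ, expL a μ.1 ∂(ν n : Measure (ProbVec E))) atTop
      (𝓝 (∫ μ, expL a μ.1 ∂(ν' : Measure (ProbVec E))))) :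
    Tendsto ν atTop (𝓝 ν') := by
  have : CompactSpace (SubVec E) := subVec_compact
  have : HasOuterApproxClosed (SubVec E) := hoac_of_metrizable
  have h1 : Tendsto (fun n => pushSub (ν n)) atTop (𝓝 (pushSub ν')) := by
    apply tendsto_nhds_of_unique_mapClusterPt
    intro Q hQ
    apply subVec_ext_measure
    intro a
    rw [pushSub_integral _ _ (expLb a).continuous]
    refine clusterPt_integral hQ (expLb a) ?_
    simp_rw [pushSub_integral _ _ (expLb a).continuous]
    exact h a
  apply tendsto_of_forall_isOpen_le_liminf'
  intro G hG
  obtain ⟨V, hV, rfl⟩ := toSub_emb.isInducing.isOpen_iff.1 hG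
  have := ProbabilityMeasure.le_liminf_measure_open_of_tendsto h1 hV
  simpa only [pushSub, ProbabilityMeasure.toMeasure_map,
    Measure.map_apply toSub_cont.measurable hV.measurableSet] using this

lemma toSub_range : Set.range (toSub : ProbVec E → SubVec E)
    = {p | ∑' i, ENNReal.ofReal (p.1 i) = 1} := by
  ext p
  have hs : Summable p.1 := summable_of_sum_le p.2.1 p.2.2
  rw [Set.mem_ofPred_eq, ← ENNReal.ofReal_tsum_of_nonneg p.2.1 hs, ENNReal.ofReal_eq_one]
  constructor
  · rintro ⟨μ, rfl⟩; exact pv_tsum μ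
  · intro h
    refine ⟨⟨p.1, p.2.1, ?_⟩, rfl⟩
    have h2 := hs.hasSum
    rwa [h] at h2

lemma toSub_meas_tsum : Measurable (fun p : SubVec E => ∑' i, ENNReal.ofReal (p.1 i)) := by
  refine Measurable.tsum fun i => ?_
  exact ENNReal.measurable_ofReal.comp ((measurable_pi_apply i).comp measurable_subtype_coe)

lemma toSub_membed : MeasurableEmbedding (toSub : ProbVec E → SubVec E) := by
  apply toSub_emb.measurableEmbedding
  rw [toSub_range]
  exact toSub_meas_tsum (measurableSet_singleton 1)

lemma weak_limit_exists {ν : ℕ → ProbabilityMeasure (ProbVec E)} (lam : ProbVec E)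
    (hb : ∀ n i, ∫ μ, μ.1 i ∂(ν n : Measure (ProbVec E)) = lam.1 i)
    (h : ∀ a : E →₀ ℝ, ∃ c, Tendsto (fun n => ∫ μ, expL a μ.1 ∂(ν n : Measure (ProbVec E))) atTop
      (𝓝 c)) : ∃ ν', Tendsto ν atTop (𝓝 ν') := by
  have : CompactSpace (SubVec E) := subVec_compact
  obtain ⟨Q, hQ⟩ := exists_clusterPt_of_compactSpace (map (fun n => pushSub (ν n)) atTop)
  have hQ : MapClusterPt Q atTop (fun n => pushSub (ν n)) := hQ
  have hcoord : ∀ i, ∫ p, p.1 i ∂(Q : Measure (SubVec E)) = lam.1 i := by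
    intro i
    have hc : Continuous (fun p : SubVec E => p.1 i) :=
      (continuous_apply i).comp continuous_subtype_val
    refine clusterPt_integral hQ (BoundedContinuousFunction.mkOfCompact ⟨fun p : SubVec E => p.1 i, hc⟩) ?_
    have e : ∀ n, ∫ p : SubVec E, p.1 i ∂(pushSub (ν n) : Measure (SubVec E)) = lam.1 i := by
      intro n
      rw [pushSub_integral _ _ hc]; exact hb n i
    simp [e]
  have hae : ∀ᵐ p ∂(Q : Measure (SubVec E)), ∑' i, ENNReal.ofReal (p.1 i) = 1 := by
    have hle : (fun p : SubVec E => ∑' i, ENNReal.ofReal (p.1 i)) ≤ᵐ[(Q : Measure (SubVec E))]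
        fun _ => 1 := by
      refine Eventually.of_forall fun p => ?_
      have hs : Summable p.1 := summable_of_sum_le p.2.1 p.2.2
      dsimp only
      rw [← ENNReal.ofReal_tsum_of_nonneg p.2.1 hs, ENNReal.ofReal_le_one]
      exact hs.tsum_le_of_sum_le p.2.2
    have hm : ∀ i, Measurable (fun p : SubVec E => p.1 i) := fun i =>
      (measurable_pi_apply i).comp measurable_subtype_coe
    have hint : ∫⁻ p, ∑' i, ENNReal.ofReal (p.1 i) ∂(Q : Measure (SubVec E)) = 1 := by
      rw [lintegral_tsum fun i => (hm i).ennreal_ofReal.aemeasurable]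
      have : ∀ i, ∫⁻ p, ENNReal.ofReal (p.1 i) ∂(Q : Measure (SubVec E)) = ENNReal.ofReal (lam.1 i) := by
        intro i
        rw [← hcoord i, ofReal_integral_eq_lintegral_ofReal]
        · refine Integrable.of_bound (hm i).aestronglyMeasurable 1 (Eventually.of_forall fun p => ?_)
          rw [Real.norm_of_nonneg (p.2.1 i)]; exact subVec_le_one p i
        · exact Eventually.of_forall fun p => p.2.1 i
      simp_rw [this]
      rw [← ENNReal.ofReal_tsum_of_nonneg lam.2.1 (pv_summable lam), pv_tsum, ENNReal.ofReal_one]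
    exact ae_eq_of_ae_le_of_lintegral_le hle (by rw [hint]; simp) measurable_const.aemeasurable
      (by rw [hint]; simp)
  have hmap : ((Q : Measure (SubVec E)).comap toSub).map toSub = (Q : Measure (SubVec E)) := by
    rw [toSub_membed.map_comap]
    apply Measure.restrict_eq_self_of_ae_mem
    rw [toSub_range]; exact hae
  have hprob : IsProbabilityMeasure ((Q : Measure (SubVec E)).comap toSub) := by
    have : IsProbabilityMeasure (((Q : Measure (SubVec E)).comap toSub).map toSub) := by
      rw [hmap]; infer_instance
    exact (Measure.isProbabilityMeasure_map_iff toSub_cont.measurable.aemeasurable).1 this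
  refine ⟨⟨_, hprob⟩, weak_conv_of_exp fun a => ?_⟩
  obtain ⟨c, hc⟩ := h a
  have : ∫ p, expLb a p ∂(Q : Measure (SubVec E)) = c := by
    refine clusterPt_integral hQ (expLb a) ?_
    simp_rw [pushSub_integral _ _ (expLb a).continuous]
    exact hc
  rw [← hmap, integral_map toSub_cont.measurable.aemeasurable
    (expLb a).continuous.measurable.aestronglyMeasurable] at this
  change Tendsto _ atTop (𝓝 (∫ μ, expLb a (toSub μ) ∂((Q : Measure (SubVec E)).comap toSub)))
  rw [this]
  exact hc

end PartThree


section PartFour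
variable {E : Type*}

def PVConvex (f : ProbVec E → ℝ) : Prop :=
  ∀ (p q r : ProbVec E) (t : ℝ), 0 ≤ t → t ≤ 1 → (∀ i, r.1 i = t * p.1 i + (1 - t) * q.1 i) →
    f r ≤ t * f p + (1 - t) * f q

noncomputable def pvJ (μ : ProbVec E) : lp (fun _ : E => ℝ) 1 :=
  ⟨μ.1, memℓp_gen (by simpa using (pv_summable μ).abs)⟩

lemma lp1_norm (x : lp (fun _ : E => ℝ) 1) : ‖x‖ = ∑' i, |x i| := by
  rw [lp.norm_eq_tsum_rpow (by simp)]
  simp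

lemma lp1_summable (x : lp (fun _ : E => ℝ) 1) : Summable (fun i => |x i|) := by
  have := (lp.memℓp x).summable (by simp)
  simpa using this

lemma pvJ_norm (μ : ProbVec E) : ‖pvJ μ‖ = 1 := by
  rw [lp1_norm, ← pv_tsum μ]
  exact tsum_congr fun i => abs_of_nonneg (pv_nonneg μ i)

lemma pvJ_cont : Continuous (pvJ : ProbVec E → _) := by
  rw [continuous_iff_continuousAt]
  intro μ
  refine tendsto_iff_norm_sub_tendsto_zero.2 ?_
  simp_rw [lp1_norm]
  exact pv_scheffe (tendsto_id (x := 𝓝 μ))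

lemma lp1_eval_cont (i : E) : Continuous (fun x : lp (fun _ : E => ℝ) 1 => x i) :=
  (lp.evalCLM ℝ (fun _ : E => ℝ) 1 i).continuous

def pvS (E : Type*) : Set (lp (fun _ : E => ℝ) 1) := {x | (∀ i, 0 ≤ x i) ∧ ‖x‖ = 1}

lemma pvS_closed : IsClosed (pvS E) := by
  have e : pvS E = (⋂ i, {x | 0 ≤ x i}) ∩ {x | ‖x‖ = 1} := by
    ext x; simp [pvS]
  rw [e]
  refine (isClosed_iInter fun i => ?_).inter (isClosed_eq continuous_norm continuous_const)
  exact isClosed_le continuous_const (lp1_eval_cont i)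

lemma pvS_hasSum {x : lp (fun _ : E => ℝ) 1} (hx : x ∈ pvS E) : HasSum (fun i => x i) 1 := by
  have h1 := lp1_summable x
  have h2 := lp1_norm x
  rw [hx.2] at h2
  simp_rw [abs_of_nonneg (hx.1 _)] at h1 h2
  rw [h2]
  exact h1.hasSum

open Classical in
noncomputable def pvInv [Nonempty E] (x : lp (fun _ : E => ℝ) 1) : ProbVec E :=
  if h : x ∈ pvS E then ⟨fun i => x i, h.1, pvS_hasSum h⟩ else pvDelta (Classical.arbitrary E)

lemma pvInv_apply [Nonempty E] {x : lp (fun _ : E => ℝ) 1} (hx : x ∈ pvS E) (i : E) :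
    (pvInv x).1 i = x i := by
  unfold pvInv
  rw [dif_pos hx]

lemma pvJ_mem (μ : ProbVec E) : pvJ μ ∈ pvS E := ⟨fun i => pv_nonneg μ i, pvJ_norm μ⟩

lemma pvInv_pvJ [Nonempty E] (μ : ProbVec E) : pvInv (pvJ μ) = μ :=
  pv_ext fun i => pvInv_apply (pvJ_mem μ) i

lemma pvInv_contOn [Nonempty E] : ContinuousOn (pvInv : _ → ProbVec E) (pvS E) := by
  rw [continuousOn_iff_continuous_domRestrict, pv_cont_iff]
  intro i
  have : (fun x : pvS E => ((pvS E).domRestrict pvInv x).1 i) = fun x => x.1 i := by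
    ext x; exact pvInv_apply x.2 i
  rw [this]
  exact (lp1_eval_cont i).comp continuous_subtype_val

lemma pvS_convex : Convex ℝ (pvS E) := by
  intro x hx y hy a b ha hb hab
  have hn : ∀ i, 0 ≤ (a • x + b • y) i := fun i =>
    add_nonneg (mul_nonneg ha (hx.1 i)) (mul_nonneg hb (hy.1 i))
  refine ⟨hn, ?_⟩
  rw [lp1_norm]
  simp_rw [abs_of_nonneg (hn _)]
  have := ((pvS_hasSum hx).mul_left a).add ((pvS_hasSum hy).mul_left b)
  have h2 := this.tsum_eq
  rw [mul_one, mul_one, hab] at h2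
  exact h2

variable [Countable E] [Nonempty E]

lemma IsBddCont.integrable {f : ProbVec E → ℝ} (hf : IsBddCont f) (ν : Measure (ProbVec E))
    [IsFiniteMeasure ν] : Integrable f ν := by
  obtain ⟨C, hC⟩ := hf.2
  exact Integrable.of_bound hf.1.measurable.aestronglyMeasurable C (Eventually.of_forall hC)

lemma pv_jensen {f : ProbVec E → ℝ} (hf : IsBddCont f) (hc : PVConvex f)
    (ν : Measure (ProbVec E)) [IsProbabilityMeasure ν] (b : ProbVec E)
    (hb : ∀ i, ∫ μ, μ.1 i ∂ν = b.1 i) : f b ≤ ∫ μ, f μ ∂ν := by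
  have hint : Integrable (pvJ : ProbVec E → _) ν :=
    Integrable.of_bound pvJ_cont.stronglyMeasurable.aestronglyMeasurable 1
      (Eventually.of_forall fun μ => (pvJ_norm μ).le)
  have hbary : ∫ μ, pvJ μ ∂ν = pvJ b := by
    ext i
    have := (lp.evalCLM ℝ (fun _ : E => ℝ) 1 i).integral_comp_comm hint
    exact this.symm.trans (hb i)
  have hconv : ConvexOn ℝ (pvS E) (fun x => f (pvInv x)) := by
    refine ⟨pvS_convex, ?_⟩
    intro x hx y hy a b ha hb hab
    have hb' : b = 1 - a := by linarith
    subst hb'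
    refine hc _ _ _ a ha (by linarith) fun i => ?_
    rw [pvInv_apply (pvS_convex hx hy ha hb hab), pvInv_apply hx, pvInv_apply hy]
    rfl
  have := hconv.map_integral_le (hf.1.comp_continuousOn pvInv_contOn) pvS_closed
    (Eventually.of_forall pvJ_mem) hint
    (by simpa [Function.comp_def, pvInv_pvJ] using hf.integrable ν)
  simpa [hbary, pvInv_pvJ] using this

lemma expL_bddCont (a : E →₀ ℝ) : IsBddCont (fun μ : ProbVec E => expL a μ.1) := by
  refine ⟨(expL_cont a).comp continuous_subtype_val, ‖expLb a‖, fun μ => ?_⟩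
  exact (expLb a).norm_coe_le_norm (toSub μ)

lemma expL_convex (a : E →₀ ℝ) : PVConvex (fun μ : ProbVec E => expL a μ.1) := by
  intro p q r t h0 h1 hr
  have := convexOn_exp.2 (x := a.sum fun i c => c * p.1 i) trivial
    (y := a.sum fun i c => c * q.1 i) trivial h0 (sub_nonneg.2 h1) (by ring)
  have e : (a.sum fun i c => c * r.1 i) =
      t • (a.sum fun i c => c * p.1 i) + (1 - t) • (a.sum fun i c => c * q.1 i) := by
    simp only [Finsupp.sum, smul_eq_mul, Finset.mul_sum, ← Finset.sum_add_distrib]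
    refine Finset.sum_congr rfl fun i _ => ?_
    rw [hr i]; ring
  simp only [expL]
  rw [e]; exact this

end PartFour


set_option linter.unusedSectionVars false
set_option linter.deprecated false

section PartFive
variable {E F : Type*} [Countable E] [Nonempty E] [MeasurableSpace F]

lemma h1_tsum {φ : Measure F} (G : E → F → ℝ) (h0 : ∀ i y, 0 ≤ G i y)
    (hi : ∀ i, Integrable (G i) φ) (hs : Summable fun i => ∫ y, G i y ∂φ)
    (hp : ∀ y, Summable fun i => G i y) :
    Integrable (fun y => ∑' i, G i y) φ ∧
      HasSum (fun i => ∫ y, G i y ∂φ) (∫ y, ∑' i, G i y ∂φ) := by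
  have hn : ∀ i y, ‖G i y‖ = G i y := fun i y => by
    rw [Real.norm_eq_abs, abs_of_nonneg (h0 i y)]
  refine ⟨?_, hasSum_integral_of_summable_integral_norm hi (by simpa [hn] using hs)⟩
  have hm : AEMeasurable (fun y => ∑' i, ENNReal.ofReal (G i y)) φ :=
    AEMeasurable.ennreal_tsum fun i => (hi i).1.aemeasurable.ennreal_ofReal
  have e : ∀ y, ∑' i, G i y = (∑' i, ENNReal.ofReal (G i y)).toReal := fun y => by
    rw [← ENNReal.ofReal_tsum_of_nonneg (fun i => h0 i y) (hp y),
      ENNReal.toReal_ofReal (tsum_nonneg fun i => h0 i y)]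
  simp_rw [e]
  refine integrable_toReal_of_lintegral_ne_top hm ?_
  rw [lintegral_tsum fun i => (hi i).1.aemeasurable.ennreal_ofReal]
  have : ∀ i, ∫⁻ y, ENNReal.ofReal (G i y) ∂φ = ENNReal.ofReal (∫ y, G i y ∂φ) := fun i =>
    (ofReal_integral_eq_lintegral_ofReal (hi i) (Eventually.of_forall (h0 i))).symm
  simp_rw [this]
  rw [← ENNReal.ofReal_tsum_of_nonneg (fun i => integral_nonneg (h0 i)) hs]
  exact ENNReal.ofReal_ne_top

lemma h2_tsum {φ : Measure F} (G : E → F → ℝ) (h0 : ∀ i y, 0 ≤ G i y)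
    (hm : ∀ i, Measurable (G i)) (hp : ∀ y, Summable fun i => G i y)
    (h : Integrable (fun y => ∑' i, G i y) φ) :
    (∀ i, Integrable (G i) φ) ∧ HasSum (fun i => ∫ y, G i y ∂φ) (∫ y, ∑' i, G i y ∂φ) := by
  have hi : ∀ i, Integrable (G i) φ := fun i => by
    refine h.mono' (hm i).aestronglyMeasurable (Eventually.of_forall fun y => ?_)
    rw [Real.norm_eq_abs, abs_of_nonneg (h0 i y)]
    exact (hp y).le_tsum i (fun k _ => h0 k y)
  refine ⟨hi, (h1_tsum G h0 hi ?_ hp).2⟩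
  refine summable_of_sum_le (c := ∫ y, ∑' i, G i y ∂φ) (fun i => integral_nonneg (h0 i)) fun s => ?_
  rw [← integral_finset_sum s fun i _ => hi i]
  refine integral_mono (integrable_finset_sum s fun i _ => hi i) h fun y => ?_
  exact (hp y).sum_le_tsum s (fun k _ => h0 k y)

structure GoodM (M : F → E → E → ℝ) : Prop where
  meas : ∀ i j, Measurable fun y => M y i j
  nn : ∀ y i j, 0 ≤ M y i j
  bd : ∀ y, ∃ C : ℝ, ∀ (i : E) (s : Finset E), ∑ j ∈ s, M y i j ≤ C

noncomputable def rsum (M : F → E → E → ℝ) (i : E) (y : F) : ℝ := ∑' j, M y i j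

variable {M : F → E → E → ℝ} (hM : GoodM M)

lemma g_row (hM : GoodM M) (i : E) (y : F) : HasSum (M y i) (rsum M i y) := by
  obtain ⟨C, hC⟩ := hM.bd y
  exact (summable_of_sum_le (hM.nn y i) (hC i)).hasSum

lemma rsum_nonneg (hM : GoodM M) (i : E) (y : F) : 0 ≤ rsum M i y := tsum_nonneg (hM.nn y i)

lemma rsum_bd (hM : GoodM M) (y : F) : ∃ C, ∀ i, |rsum M i y| ≤ C := by
  obtain ⟨C, hC⟩ := hM.bd y
  refine ⟨C, fun i => ?_⟩
  rw [abs_of_nonneg (rsum_nonneg hM i y)]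
  exact (g_row hM i y).summable.tsum_le_of_sum_le (hC i)

lemma rsum_meas (hM : GoodM M) (i : E) : Measurable (rsum M i) :=
  Measurable.tsum fun j => hM.meas i j

lemma g_sum (hM : GoodM M) (μ : ProbVec E) (y : F) : Summable fun i => μ.1 i * rsum M i y := by
  obtain ⟨C, hC⟩ := rsum_bd hM y
  exact pv_mul_summable μ hC

lemma g_swap (hM : GoodM M) (μ : ProbVec E) (y : F) :
    (∀ j, Summable (fun i => μ.1 i * M y i j)) ∧
      HasSum (rowMul M μ.1 y) (∑' i, μ.1 i * rsum M i y) :=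
  tsum_swap (fun i j => μ.1 i * M y i j) (fun i j => mul_nonneg (pv_nonneg μ i) (hM.nn y i j))
    _ (fun i => (g_row hM i y).mul_left _) (g_sum hM μ y)

noncomputable def tot (M : F → E → E → ℝ) (μ : ProbVec E) (y : F) : ℝ := rowTot (rowMul M μ.1 y)

lemma tot_eq (hM : GoodM M) (μ : ProbVec E) (y : F) : tot M μ y = ∑' i, μ.1 i * rsum M i y :=
  (g_swap hM μ y).2.tsum_eq

lemma rowMul_nonneg (hM : GoodM M) (μ : ProbVec E) (y : F) (j : E) : 0 ≤ rowMul M μ.1 y j :=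
  tsum_nonneg fun i => mul_nonneg (pv_nonneg μ i) (hM.nn y i j)

lemma rowMul_hasSum (hM : GoodM M) (μ : ProbVec E) (y : F) : HasSum (rowMul M μ.1 y) (tot M μ y) := by
  rw [tot_eq hM]; exact (g_swap hM μ y).2

lemma tot_nonneg (hM : GoodM M) (μ : ProbVec E) (y : F) : 0 ≤ tot M μ y :=
  tsum_nonneg (rowMul_nonneg hM μ y)

lemma fs_spec (hM : GoodM M) (μ : ProbVec E) (y : F) (j : E) :
    (filterStep M μ y).1 j * tot M μ y = rowMul M μ.1 y j := by
  have hex : ∃ ν : ProbVec E, ∀ j,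
      (ν : E → ℝ) j * rowTot (rowMul M (μ : E → ℝ) y) = rowMul M (μ : E → ℝ) y j := by
    by_cases h : tot M μ y = 0
    · refine ⟨μ, fun j => ?_⟩
      have hz : rowMul M μ.1 y j = 0 := by
        have := rowMul_hasSum hM μ y
        rw [h] at this
        exact congrFun ((hasSum_zero_iff_of_nonneg (rowMul_nonneg hM μ y)).1 this) j
      rw [hz]
      change μ.1 j * tot M μ y = 0
      rw [h, mul_zero]
    · refine ⟨⟨fun j => rowMul M μ.1 y j / tot M μ y,
        fun j => div_nonneg (rowMul_nonneg hM μ y j) (tot_nonneg hM μ y), ?_⟩, fun j => ?_⟩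
      · have := (rowMul_hasSum hM μ y).div_const (tot M μ y)
        rwa [div_self h] at this
      · exact div_mul_cancel₀ _ h
  unfold filterStep
  rw [dif_pos hex]
  exact hex.choose_spec j

lemma rowMul_meas (hM : GoodM M) (j : E) :
    Measurable fun z : ProbVec E × F => rowMul M z.1.1 z.2 j :=
  Measurable.tsum fun i => (((pv_cont_coord i).measurable).comp measurable_fst).mul
    ((hM.meas i j).comp measurable_snd)

lemma tot_meas (hM : GoodM M) : Measurable fun z : ProbVec E × F => tot M z.1 z.2 :=
  Measurable.tsum fun j => rowMul_meas hM j

open Classical in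
noncomputable def fG (M : F → E → E → ℝ) (μ : ProbVec E) (y : F) : ProbVec E :=
  if 0 < tot M μ y then filterStep M μ y else μ

lemma pv_measurable_iff {X : Type*} [MeasurableSpace X] {f : X → ProbVec E}
    (h : ∀ j, Measurable fun x => (f x).1 j) : Measurable f := by
  have : Measurable (fun x => (f x).1) := measurable_pi_iff.2 h
  exact (Measurable.subtype_mk (p := fun p : E → ℝ => (∀ i, 0 ≤ p i) ∧ HasSum p 1) this
    (h := fun x => (f x).2))

lemma fG_meas (hM : GoodM M) : Measurable fun z : ProbVec E × F => fG M z.1 z.2 := by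
  refine pv_measurable_iff fun j => ?_
  have : (fun z : ProbVec E × F => (fG M z.1 z.2).1 j) = fun z =>
      if 0 < tot M z.1 z.2 then rowMul M z.1.1 z.2 j / tot M z.1 z.2 else z.1.1 j := by
    ext z
    unfold fG
    split_ifs with h
    · rw [← fs_spec hM, mul_div_cancel_right₀ _ h.ne']
    · rfl
  rw [this]
  exact Measurable.ite (measurableSet_lt measurable_const (tot_meas hM))
    ((rowMul_meas hM j).div (tot_meas hM)) ((pv_cont_coord j).measurable.comp measurable_fst)

lemma fk_eq (hM : GoodM M) (φ : Measure F) (f : ProbVec E → ℝ) (μ : ProbVec E) :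
    filterKernel M φ f μ = ∫ y, f (fG M μ y) * tot M μ y ∂φ := by
  refine integral_congr_ae (Eventually.of_forall fun y => ?_)
  change f (filterStep M μ y) * tot M μ y = f (fG M μ y) * tot M μ y
  unfold fG
  split_ifs with h
  · rfl
  · have : tot M μ y = 0 := le_antisymm (not_lt.1 h) (tot_nonneg hM μ y)
    rw [this, mul_zero, mul_zero]

end PartFive

set_option linter.unusedSectionVars false

section PartSix
variable {E F : Type*} [Countable E] [Nonempty E] [MeasurableSpace F]

structure GoodP (M : F → E → E → ℝ) (φ : Measure F) : Prop where
  good : GoodM M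
  int : ∀ i j, Integrable (fun y => M y i j) φ
  tr : ∀ i, HasSum (fun j => transMat M φ i j) 1

variable {M : F → E → E → ℝ} {φ : Measure F}

lemma GoodP.P0 (h : GoodP M φ) (i j : E) : 0 ≤ transMat M φ i j :=
  integral_nonneg fun y => h.good.nn y i j

lemma rsum_int (h : GoodP M φ) (i : E) : Integrable (rsum M i) φ ∧ ∫ y, rsum M i y ∂φ = 1 := by
  have := h1_tsum (φ := φ) (fun j y => M y i j) (fun j y => h.good.nn y i j) (h.int i)
    (h.tr i).summable (fun y => (g_row h.good i y).summable)
  exact ⟨this.1, this.2.unique (h.tr i)⟩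

lemma tot_int (h : GoodP M φ) (μ : ProbVec E) :
    Integrable (tot M μ) φ ∧ ∫ y, tot M μ y ∂φ = 1 := by
  have e : tot M μ = fun y => ∑' i, μ.1 i * rsum M i y := funext fun y => tot_eq h.good μ y
  have e2 : ∀ i, ∫ y, μ.1 i * rsum M i y ∂φ = μ.1 i := fun i => by
    rw [integral_const_mul, (rsum_int h i).2, mul_one]
  have := h1_tsum (φ := φ) (fun i y => μ.1 i * rsum M i y)
    (fun i y => mul_nonneg (pv_nonneg μ i) (rsum_nonneg h.good i y))
    (fun i => (rsum_int h i).1.const_mul _) (by simpa only [e2] using pv_summable μ)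
    (fun y => g_sum h.good μ y)
  simp only [e2] at this
  rw [e]
  exact ⟨this.1, this.2.unique μ.2.2⟩

lemma tot_meas' (hM : GoodM M) (μ : ProbVec E) : Measurable (tot M μ) :=
  (tot_meas hM).comp measurable_prodMk_left

lemma fG_meas' (hM : GoodM M) (μ : ProbVec E) : Measurable (fG M μ) :=
  (fG_meas hM).comp measurable_prodMk_left

noncomputable def fK (M : F → E → E → ℝ) (φ : Measure F) (μ : ProbVec E) : Measure (ProbVec E) :=
  (φ.withDensity fun y => ENNReal.ofReal (tot M μ y)).map (fG M μ)

lemma fK_prob (h : GoodP M φ) (μ : ProbVec E) : IsProbabilityMeasure (fK M φ μ) := by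
  have : IsProbabilityMeasure (φ.withDensity fun y => ENNReal.ofReal (tot M μ y)) := by
    constructor
    rw [withDensity_apply _ MeasurableSet.univ, Measure.restrict_univ,
      ← ofReal_integral_eq_lintegral_ofReal (tot_int h μ).1
        (Eventually.of_forall (tot_nonneg h.good μ)), (tot_int h μ).2, ENNReal.ofReal_one]
  exact Measure.isProbabilityMeasure_map (fG_meas' h.good μ).aemeasurable

lemma fK_meas [SFinite φ] (hM : GoodM M) : Measurable (fK M φ) := by
  refine Measure.measurable_of_measurable_coe _ fun s hs => ?_
  have e : (fun μ => fK M φ μ s) = fun μ =>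
      ∫⁻ y, s.indicator 1 (fG M μ y) * ENNReal.ofReal (tot M μ y) ∂φ := by
    ext μ
    unfold fK
    rw [Measure.map_apply (fG_meas' hM μ) hs, withDensity_apply _ (fG_meas' hM μ hs),
      ← lintegral_indicator (fG_meas' hM μ hs)]
    refine lintegral_congr fun y => ?_
    by_cases hy : fG M μ y ∈ s <;> simp [Set.indicator, hy]
  rw [e]
  refine Measurable.lintegral_prod_right' (f := fun z : ProbVec E × F =>
    s.indicator 1 (fG M z.1 z.2) * ENNReal.ofReal (tot M z.1 z.2)) ?_
  exact ((measurable_one.indicator hs).comp (fG_meas hM)).mul (tot_meas hM).ennreal_ofReal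

lemma fK_integral (hM : GoodM M) (f : ProbVec E → ℝ) (hf : Measurable f) (μ : ProbVec E) :
    ∫ ν, f ν ∂(fK M φ μ) = filterKernel M φ f μ := by
  unfold fK
  rw [integral_map (fG_meas' hM μ).aemeasurable hf.aestronglyMeasurable,
    integral_withDensity_eq_integral_toReal_smul (tot_meas' hM μ).ennreal_ofReal
      (Eventually.of_forall fun y => ENNReal.ofReal_lt_top), fk_eq hM]
  refine integral_congr_ae (Eventually.of_forall fun y => ?_)
  simp only [smul_eq_mul]
  rw [ENNReal.toReal_ofReal (tot_nonneg hM μ y), mul_comm]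

lemma bind_integral {X : Type*} [MeasurableSpace X] (ν : Measure X) [IsProbabilityMeasure ν]
    (κ : X → Measure X) (hκ : Measurable κ) (hp : ∀ x, IsProbabilityMeasure (κ x))
    (f : X → ℝ) (C : ℝ) (hf : Measurable f) (hC : ∀ x, |f x| ≤ C) :
    ∫ x, f x ∂(ν.bind κ) = ∫ x, ∫ z, f z ∂(κ x) ∂ν := by
  let K : ProbabilityTheory.Kernel X X := ⟨κ, hκ⟩
  have : ProbabilityTheory.IsMarkovKernel K := ⟨hp⟩
  have hb : ν.bind κ = (K.comp (ProbabilityTheory.Kernel.const Unit ν)) () := by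
    rw [ProbabilityTheory.Kernel.comp_apply]; rfl
  rw [hb, ProbabilityTheory.Kernel.integral_comp]
  · rfl
  · exact Integrable.of_bound hf.aestronglyMeasurable C (Eventually.of_forall hC)

noncomputable def fT [SFinite φ] (h : GoodP M φ) (ν : ProbabilityMeasure (ProbVec E)) :
    ProbabilityMeasure (ProbVec E) :=
  ⟨(ν : Measure (ProbVec E)).bind (fK M φ), isProbabilityMeasure_bind (fK_meas h.good).aemeasurable
    (Eventually.of_forall (fK_prob h))⟩

lemma fT_integral [SFinite φ] (h : GoodP M φ) (ν : ProbabilityMeasure (ProbVec E))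
    (f : ProbVec E → ℝ) (hf : IsBddCont f) :
    ∫ μ, f μ ∂(fT h ν : Measure (ProbVec E)) = ∫ μ, filterKernel M φ f μ ∂(ν : Measure (ProbVec E)) := by
  obtain ⟨C, hC⟩ := hf.2
  have := bind_integral (ν : Measure (ProbVec E)) (fK M φ) (fK_meas h.good) (fK_prob h) f C
    hf.1.measurable hC
  simp_rw [fK_integral h.good f hf.1.measurable] at this
  exact this

lemma fG_tot_meas (hM : GoodM M) {f : ProbVec E → ℝ} (hf : Continuous f) (μ : ProbVec E) :
    Measurable fun y => f (fG M μ y) := hf.measurable.comp (fG_meas' hM μ)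

lemma fk_int (h : GoodP M φ) {f : ProbVec E → ℝ} (hf : IsBddCont f) (μ μ' : ProbVec E) :
    Integrable (fun y => f (fG M μ y) * tot M μ' y) φ := by
  obtain ⟨C, hC⟩ := hf.2
  exact (tot_int h μ').1.bdd_mul (c := C) (fG_tot_meas h.good hf.1 μ).aestronglyMeasurable
    (Eventually.of_forall fun y => hC _)

lemma fk_bdd (h : GoodP M φ) {f : ProbVec E → ℝ} {C : ℝ} (hC : ∀ μ, |f μ| ≤ C)
    (μ : ProbVec E) : |filterKernel M φ f μ| ≤ C := by
  rw [fk_eq h.good]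
  have := norm_integral_le_of_norm_le (f := fun y => f (fG M μ y) * tot M μ y)
    ((tot_int h μ).1.const_mul C) (Eventually.of_forall fun y => by
      rw [norm_mul, Real.norm_eq_abs, Real.norm_eq_abs, abs_of_nonneg (tot_nonneg h.good μ y)]
      exact mul_le_mul_of_nonneg_right (hC _) (tot_nonneg h.good μ y))
  rwa [integral_const_mul, (tot_int h μ).2, mul_one] at this

lemma tot_diff (h : GoodP M φ) (p q : ProbVec E) :
    ∫ y, |tot M p y - tot M q y| ∂φ ≤ ∑' i, |p.1 i - q.1 i| := by
  have hs : ∀ y, Summable fun i => |p.1 i - q.1 i| * rsum M i y := fun y => by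
    obtain ⟨C, hC⟩ := rsum_bd h.good y
    refine Summable.of_nonneg_of_le (fun i => mul_nonneg (abs_nonneg _) (rsum_nonneg h.good i y))
      (fun i => ?_) ((pv_abs_summable p q).mul_right C)
    exact mul_le_mul_of_nonneg_left ((le_abs_self _).trans (hC i)) (abs_nonneg _)
  have e2 : ∀ i, ∫ y, |p.1 i - q.1 i| * rsum M i y ∂φ = |p.1 i - q.1 i| := fun i => by
    rw [integral_const_mul, (rsum_int h i).2, mul_one]
  have := h1_tsum (φ := φ) (fun i y => |p.1 i - q.1 i| * rsum M i y)
    (fun i y => mul_nonneg (abs_nonneg _) (rsum_nonneg h.good i y))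
    (fun i => (rsum_int h i).1.const_mul _) (by simpa only [e2] using pv_abs_summable p q) hs
  simp only [e2] at this
  rw [this.2.tsum_eq]
  refine integral_mono ((tot_int h p).1.sub (tot_int h q).1).abs this.1 fun y => ?_
  simp only []
  rw [tot_eq h.good, tot_eq h.good, ← (g_sum h.good p y).tsum_sub (g_sum h.good q y)]
  have e3 : ∀ i, ‖p.1 i * rsum M i y - q.1 i * rsum M i y‖ = |p.1 i - q.1 i| * rsum M i y :=
    fun i => by
      rw [← sub_mul, norm_mul, Real.norm_eq_abs, Real.norm_eq_abs,
        abs_of_nonneg (rsum_nonneg h.good i y)]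
  have := norm_tsum_le_tsum_norm (f := fun i => p.1 i * rsum M i y - q.1 i * rsum M i y)
    (by simpa only [e3] using hs y)
  simpa only [e3, Real.norm_eq_abs] using this

lemma tot_tendsto (hM : GoodM M) {p : ℕ → ProbVec E} {μ : ProbVec E}
    (hp : Tendsto p atTop (𝓝 μ)) (y : F) :
    Tendsto (fun n => tot M (p n) y) atTop (𝓝 (tot M μ y)) := by
  obtain ⟨C, hC⟩ := rsum_bd hM y
  simp_rw [tot_eq hM]
  exact ((pv_cont_pair hC).tendsto μ).comp hp

lemma rowMul_tendsto (hM : GoodM M) {p : ℕ → ProbVec E} {μ : ProbVec E}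
    (hp : Tendsto p atTop (𝓝 μ)) (y : F) (j : E) :
    Tendsto (fun n => rowMul M (p n).1 y j) atTop (𝓝 (rowMul M μ.1 y j)) := by
  obtain ⟨C, hC⟩ := rsum_bd hM y
  have : ∀ i, |M y i j| ≤ C := fun i => by
    rw [abs_of_nonneg (hM.nn y i j)]
    exact (le_hasSum (g_row hM i y) j (fun k _ => hM.nn y i k)).trans ((le_abs_self _).trans (hC i))
  exact ((pv_cont_pair this).tendsto μ).comp hp

lemma fG_tendsto (hM : GoodM M) {p : ℕ → ProbVec E} {μ : ProbVec E}
    (hp : Tendsto p atTop (𝓝 μ)) (y : F) (hy : 0 < tot M μ y) :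
    Tendsto (fun n => fG M (p n) y) atTop (𝓝 (fG M μ y)) := by
  rw [pv_tendsto_iff]
  intro j
  have ht := tot_tendsto hM hp y
  have hev := ht.eventually (lt_mem_nhds hy)
  have e : ∀ q : ProbVec E, 0 < tot M q y → (fG M q y).1 j = rowMul M q.1 y j / tot M q y := by
    intro q hq
    unfold fG
    rw [if_pos hq, ← fs_spec hM, mul_div_cancel_right₀ _ hq.ne']
  rw [e μ hy]
  refine ((rowMul_tendsto hM hp y j).div ht hy.ne').congr' ?_
  filter_upwards [hev] with n hn
  exact (e _ hn).symm

lemma fk_feller (h : GoodP M φ) {f : ProbVec E → ℝ} (hf : IsBddCont f) :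
    IsBddCont (filterKernel M φ f) := by
  obtain ⟨C, hC⟩ := hf.2
  refine ⟨?_, C, fk_bdd h hC⟩
  rw [continuous_iff_seqContinuous]
  intro p μ hp
  have hC0 : 0 ≤ C := (abs_nonneg _).trans (hC μ)
  have hA : Tendsto (fun n => ∫ y, f (fG M (p n) y) * tot M μ y ∂φ) atTop
      (𝓝 (∫ y, f (fG M μ y) * tot M μ y ∂φ)) := by
    refine tendsto_integral_of_dominated_convergence (fun y => C * tot M μ y)
      (fun n => (fk_int h hf _ _).1) ((tot_int h μ).1.const_mul C)
      (fun n => Eventually.of_forall fun y => ?_) (Eventually.of_forall fun y => ?_)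
    · rw [norm_mul, Real.norm_eq_abs, Real.norm_eq_abs, abs_of_nonneg (tot_nonneg h.good μ y)]
      exact mul_le_mul_of_nonneg_right (hC _) (tot_nonneg h.good μ y)
    · rcases (tot_nonneg h.good μ y).eq_or_lt with h0 | h0
      · simp [← h0]
      · exact (((hf.1.tendsto _).comp (fG_tendsto h.good hp y h0))).mul_const _
  have hB : Tendsto (fun n => filterKernel M φ f (p n) - ∫ y, f (fG M (p n) y) * tot M μ y ∂φ)
      atTop (𝓝 0) := by
    have hs := (pv_scheffe hp).const_mul C
    rw [mul_zero] at hs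
    refine squeeze_zero_norm (fun n => ?_) hs
    rw [fk_eq h.good, ← integral_sub (fk_int h hf _ _) (fk_int h hf _ _)]
    refine le_trans ?_ (mul_le_mul_of_nonneg_left (tot_diff h (p n) μ) hC0)
    rw [← integral_const_mul]
    refine norm_integral_le_of_norm_le
      (((tot_int h (p n)).1.sub (tot_int h μ).1).abs.const_mul C) (Eventually.of_forall fun y => ?_)
    rw [← mul_sub, norm_mul]
    exact mul_le_mul_of_nonneg_right (hC _) (abs_nonneg _)
  have := hB.add hA
  rw [zero_add, ← fk_eq h.good] at this
  simpa [Function.comp_def] using this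

lemma rowMul_lin (hM : GoodM M) {p q r : ProbVec E} {t : ℝ}
    (hr : ∀ i, r.1 i = t * p.1 i + (1 - t) * q.1 i) (y : F) (j : E) :
    rowMul M r.1 y j = t * rowMul M p.1 y j + (1 - t) * rowMul M q.1 y j := by
  unfold rowMul
  rw [← tsum_mul_left, ← tsum_mul_left, ← (((g_swap hM p y).1 j).mul_left t).tsum_add
    (((g_swap hM q y).1 j).mul_left (1 - t))]
  refine tsum_congr fun i => ?_
  rw [hr]; ring

lemma tot_lin (hM : GoodM M) {p q r : ProbVec E} {t : ℝ}
    (hr : ∀ i, r.1 i = t * p.1 i + (1 - t) * q.1 i) (y : F) :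
    tot M r y = t * tot M p y + (1 - t) * tot M q y := by
  have := ((rowMul_hasSum hM p y).mul_left t).add ((rowMul_hasSum hM q y).mul_left (1 - t))
  refine (rowMul_hasSum hM r y).unique ?_
  have e : rowMul M r.1 y = fun j => t * rowMul M p.1 y j + (1 - t) * rowMul M q.1 y j :=
    funext fun j => rowMul_lin hM hr y j
  rw [e]
  exact this

lemma fk_convex (h : GoodP M φ) {f : ProbVec E → ℝ} (hf : IsBddCont f) (hc : PVConvex f) :
    PVConvex (filterKernel M φ f) := by
  intro p q r t h0 h1 hr
  have hint : ∀ μ, Integrable (fun y => f (filterStep M μ y) * tot M μ y) φ := fun μ => by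
    refine (fk_int h hf μ μ).congr (Eventually.of_forall fun y => ?_)
    simp only [fG]
    split_ifs with hh
    · rfl
    · have : tot M μ y = 0 := le_antisymm (not_lt.1 hh) (tot_nonneg h.good μ y)
      rw [this, mul_zero, mul_zero]
  have e : ∀ μ, filterKernel M φ f μ = ∫ y, f (filterStep M μ y) * tot M μ y ∂φ := fun μ => rfl
  rw [e, e, e, ← integral_const_mul, ← integral_const_mul,
    ← integral_add ((hint p).const_mul _) ((hint q).const_mul _)]
  refine integral_mono (hint r) (((hint p).const_mul _).add ((hint q).const_mul _)) fun y => ?_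
  simp only [Pi.add_apply]
  have hl := tot_lin h.good hr y
  have hp0 := tot_nonneg h.good p y
  have hq0 := tot_nonneg h.good q y
  have ht' : 0 ≤ 1 - t := by linarith
  have ha : 0 ≤ t * tot M p y := mul_nonneg h0 hp0
  have hb : 0 ≤ (1 - t) * tot M q y := mul_nonneg ht' hq0
  rcases (tot_nonneg h.good r y).eq_or_lt with hz | hz
  · have h1 : t * tot M p y = 0 := by linarith
    have h2 : (1 - t) * tot M q y = 0 := by linarith
    rw [← hz]
    have e1 : t * (f (filterStep M p y) * tot M p y) = f (filterStep M p y) * (t * tot M p y) := by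
      ring
    have e2 : (1 - t) * (f (filterStep M q y) * tot M q y) =
      f (filterStep M q y) * ((1 - t) * tot M q y) := by ring
    rw [e1, e2, h1, h2]; simp
  · set s := t * tot M p y / tot M r y with hs
    have hs1 : 1 - s = (1 - t) * tot M q y / tot M r y := by
      rw [hs]; field_simp; linarith
    have key := hc (filterStep M p y) (filterStep M q y) (filterStep M r y) s
      (div_nonneg ha hz.le) (by rw [hs, div_le_one hz]; linarith) (fun i => by
        rw [hs1, hs]
        have hr1 := fs_spec h.good r y i
        rw [rowMul_lin h.good hr, ← fs_spec h.good p, ← fs_spec h.good q] at hr1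
        field_simp
        linarith)
    have := mul_le_mul_of_nonneg_right key hz.le
    refine this.trans (le_of_eq ?_)
    rw [hs1, hs]
    field_simp

lemma fk_coord (h : GoodP M φ) (μ : ProbVec E) (j : E) :
    filterKernel M φ (fun ν => ν.1 j) μ = (pvStep (transMat M φ) h.P0 h.tr μ).1 j := by
  change ∫ y, (filterStep M μ y).1 j * tot M μ y ∂φ = ∑' i, μ.1 i * transMat M φ i j
  simp_rw [fs_spec h.good]
  have e2 : ∀ i, ∫ y, μ.1 i * M y i j ∂φ = μ.1 i * transMat M φ i j := fun i => by
    rw [integral_const_mul]; rfl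
  have := h1_tsum (φ := φ) (fun i y => μ.1 i * M y i j)
    (fun i y => mul_nonneg (pv_nonneg μ i) (h.good.nn y i j))
    (fun i => (h.int i j).const_mul _)
    (by simpa only [e2] using (pvStep_aux _ h.P0 h.tr μ).1 j)
    (fun y => (g_swap h.good μ y).1 j)
  simp only [e2] at this
  exact this.2.tsum_eq.symm

end PartSix

set_option linter.unusedSectionVars false

section PartSeven
variable {E F : Type*} [Countable E] [Nonempty E] [MeasurableSpace F]

lemma bary_sum (ν : Measure (ProbVec E)) [IsProbabilityMeasure ν] :
    HasSum (fun i => ∫ μ, μ.1 i ∂ν) 1 := by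
  have := (h2_tsum (φ := ν) (fun (i : E) (μ : ProbVec E) => μ.1 i) (fun i μ => pv_nonneg μ i)
    (fun i => (pv_cont_coord i).measurable) (fun μ => pv_summable μ) (by simp [pv_tsum])).2
  simpa [pv_tsum] using this

noncomputable def bary (ν : ProbabilityMeasure (ProbVec E)) : ProbVec E :=
  ⟨fun i => ∫ μ, μ.1 i ∂(ν : Measure (ProbVec E)), fun i => integral_nonneg fun μ => pv_nonneg μ i,
    bary_sum _⟩

lemma coord_bddCont (i : E) : IsBddCont (fun μ : ProbVec E => μ.1 i) :=
  ⟨pv_cont_coord i, 1, fun μ => by rw [abs_of_nonneg (pv_nonneg μ i)]; exact pv_le_one μ i⟩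

lemma bary_pair (ν : ProbabilityMeasure (ProbVec E)) {g : E → ℝ} {C : ℝ} (hg : ∀ i, |g i| ≤ C) :
    ∫ μ, ∑' i, μ.1 i * g i ∂(ν : Measure (ProbVec E)) = ∑' i, (bary ν).1 i * g i := by
  have hi : ∀ i, Integrable (fun μ : ProbVec E => μ.1 i * g i) (ν : Measure (ProbVec E)) :=
    fun i => ((coord_bddCont i).integrable _).mul_const _
  have := hasSum_integral_of_summable_integral_norm hi ?_
  · rw [← this.tsum_eq]
    refine tsum_congr fun i => ?_
    rw [integral_mul_const]; rfl
  · have e : ∀ i, ∫ μ : ProbVec E, ‖μ.1 i * g i‖ ∂(ν : Measure (ProbVec E)) = (bary ν).1 i * |g i| := by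
      intro i
      simp_rw [norm_mul, Real.norm_eq_abs, abs_of_nonneg (pv_nonneg _ i)]
      rw [integral_mul_const]; rfl
    simp_rw [e]
    exact pv_mul_summable (bary ν) (g := fun i => |g i|) (C := C) (fun i => by rw [abs_abs]; exact hg i)

section mix
variable [DecidableEq E]

noncomputable def mixM (m : ProbVec E) : Measure (ProbVec E) :=
  Measure.sum fun i => ENNReal.ofReal (m.1 i) • Measure.dirac (pvDelta i)

lemma mixM_prob (m : ProbVec E) : IsProbabilityMeasure (mixM m) := by
  constructor
  unfold mixM
  rw [Measure.sum_apply _ MeasurableSet.univ]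
  simp only [Measure.smul_apply, measure_univ, smul_eq_mul, mul_one]
  rw [← ENNReal.ofReal_tsum_of_nonneg (pv_nonneg m) (pv_summable m), pv_tsum, ENNReal.ofReal_one]

noncomputable def mix (m : ProbVec E) : ProbabilityMeasure (ProbVec E) := ⟨mixM m, mixM_prob m⟩

lemma mix_integral (m : ProbVec E) {f : ProbVec E → ℝ} (hf : IsBddCont f) :
    ∫ μ, f μ ∂(mix m : Measure (ProbVec E)) = ∑' i, m.1 i * f (pvDelta i) := by
  have := mixM_prob m
  have hi := hf.integrable (mixM m)
  change ∫ μ, f μ ∂(mixM m) = _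
  unfold mixM at hi ⊢
  rw [integral_sum_measure hi]
  refine tsum_congr fun i => ?_
  rw [integral_smul_measure, integral_dirac, ENNReal.toReal_ofReal (pv_nonneg m i), smul_eq_mul]

lemma mix_bary (m : ProbVec E) : bary (mix m) = m := by
  refine pv_ext fun j => ?_
  change ∫ μ, μ.1 j ∂(mix m : Measure (ProbVec E)) = _
  rw [mix_integral m (coord_bddCont j), tsum_eq_single j]
  · simp [pvDelta]
  · intro i hi
    simp [pvDelta, hi]

lemma convex_upper {f : ProbVec E → ℝ} (hf : IsBddCont f) (hc : PVConvex f) (μ : ProbVec E) :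
    f μ ≤ ∑' i, μ.1 i * f (pvDelta i) := by
  rw [← mix_integral μ hf]
  refine pv_jensen hf hc _ μ fun i => ?_
  exact congrFun (congrArg Subtype.val (mix_bary μ)) i

end mix

lemma jensen_bary {f : ProbVec E → ℝ} (hf : IsBddCont f) (hc : PVConvex f)
    (ν : ProbabilityMeasure (ProbVec E)) : f (bary ν) ≤ ∫ μ, f μ ∂(ν : Measure (ProbVec E)) :=
  pv_jensen hf hc _ _ fun _ => rfl

lemma upper_bary [DecidableEq E] {f : ProbVec E → ℝ} (hf : IsBddCont f) (hc : PVConvex f)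
    (ν : ProbabilityMeasure (ProbVec E)) :
    ∫ μ, f μ ∂(ν : Measure (ProbVec E)) ≤ ∑' i, (bary ν).1 i * f (pvDelta i) := by
  obtain ⟨C, hC⟩ := hf.2
  have hg : ∀ i : E, |f (pvDelta i)| ≤ C := fun i => hC _
  rw [← bary_pair ν hg]
  refine integral_mono (hf.integrable _) ?_ (convex_upper hf hc)
  refine IsBddCont.integrable ⟨pv_cont_pair hg, C, fun μ => ?_⟩ _
  have h0 : 0 ≤ C := (abs_nonneg _).trans (hC μ)
  rw [abs_le]
  have hs := pv_mul_summable μ hg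
  have h1 := (pv_summable μ).mul_right C
  have e1 : ∑' i, μ.1 i * C = C := by rw [tsum_mul_right, pv_tsum, one_mul]
  constructor
  · have := (h1.neg).tsum_le_tsum (fun i => by
      have := mul_le_mul_of_nonneg_left (abs_le.1 (hg i)).1 (pv_nonneg μ i)
      linarith) hs
    rwa [tsum_neg, e1] at this
  · have := hs.tsum_le_tsum (fun i => mul_le_mul_of_nonneg_left (abs_le.1 (hg i)).2 (pv_nonneg μ i)) h1
    rwa [e1] at this

variable {M : F → E → E → ℝ} {φ : Measure F} [SFinite φ]

lemma iter_bddCont (h : GoodP M φ) {f : ProbVec E → ℝ} (hf : IsBddCont f) (n : ℕ) :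
    IsBddCont ((filterKernel M φ)^[n] f) := by
  induction n with
  | zero => exact hf
  | succ n ih => rw [Function.iterate_succ_apply']; exact fk_feller h ih

lemma iter_convex (h : GoodP M φ) {f : ProbVec E → ℝ} (hf : IsBddCont f) (hc : PVConvex f) (n : ℕ) :
    PVConvex ((filterKernel M φ)^[n] f) := by
  induction n with
  | zero => exact hc
  | succ n ih => rw [Function.iterate_succ_apply']; exact fk_convex h (iter_bddCont h hf n) ih

lemma iter_integral (h : GoodP M φ) {f : ProbVec E → ℝ} (hf : IsBddCont f) (n : ℕ)
    (ν : ProbabilityMeasure (ProbVec E)) :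
    ∫ μ, f μ ∂((fT h)^[n] ν : Measure (ProbVec E)) =
      ∫ μ, ((filterKernel M φ)^[n] f) μ ∂(ν : Measure (ProbVec E)) := by
  induction n generalizing ν with
  | zero => rfl
  | succ n ih =>
    rw [Function.iterate_succ_apply, ih, Function.iterate_succ_apply',
      fT_integral h ν _ (iter_bddCont h hf n)]

lemma bary_fT (h : GoodP M φ) (ν : ProbabilityMeasure (ProbVec E)) :
    bary (fT h ν) = pvStep (transMat M φ) h.P0 h.tr (bary ν) := by
  refine pv_ext fun j => ?_
  change ∫ μ, μ.1 j ∂(fT h ν : Measure (ProbVec E)) = _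
  rw [fT_integral h ν _ (coord_bddCont j)]
  simp_rw [fk_coord h]
  exact bary_pair ν (fun i => stoch_le_one _ h.P0 h.tr i j)

lemma bary_iter (h : GoodP M φ) (ν : ProbabilityMeasure (ProbVec E)) (n : ℕ) :
    bary ((fT h)^[n] ν) = (pvStep (transMat M φ) h.P0 h.tr)^[n] (bary ν) := by
  induction n with
  | zero => rfl
  | succ n ih => rw [Function.iterate_succ_apply', Function.iterate_succ_apply', bary_fT, ih]

lemma wk_int {ν : ℕ → ProbabilityMeasure (ProbVec E)} {ν' : ProbabilityMeasure (ProbVec E)}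
    (hν : Tendsto ν atTop (𝓝 ν')) {f : ProbVec E → ℝ} (hf : IsBddCont f) :
    Tendsto (fun n => ∫ μ, f μ ∂(ν n : Measure (ProbVec E))) atTop
      (𝓝 (∫ μ, f μ ∂(ν' : Measure (ProbVec E)))) := by
  obtain ⟨C, hC⟩ := hf.2
  exact ProbabilityMeasure.tendsto_iff_forall_integral_tendsto.1 hν
    (BoundedContinuousFunction.ofNormedAddCommGroup f hf.1 C hC)

lemma limit_inv (h : GoodP M φ) (ν ν' : ProbabilityMeasure (ProbVec E))
    (hν : Tendsto (fun n => (fT h)^[n] ν) atTop (𝓝 ν')) : IsPiInvariant M φ ν' := by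
  intro f hf
  refine tendsto_nhds_unique (wk_int hν (fk_feller h hf)) ?_
  have := (wk_int hν hf).comp (tendsto_add_atTop_nat 1)
  refine this.congr fun n => ?_
  simp only [Function.comp_apply]
  rw [Function.iterate_succ_apply', fT_integral h _ f hf]

lemma lim_of_bary (h : GoodP M φ) (lam : ProbVec E)
    (hinv : pvStep (transMat M φ) h.P0 h.tr lam = lam)
    (𝕄 : ProbabilityMeasure (ProbVec E))
    (huniq : ∀ 𝕄' : ProbabilityMeasure (ProbVec E), IsPiInvariant M φ 𝕄' → 𝕄' = 𝕄)
    (ν : ProbabilityMeasure (ProbVec E)) (hb : bary ν = lam)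
    (hc : ∀ a : E →₀ ℝ, ∃ c, Tendsto (fun n => ∫ μ, ((filterKernel M φ)^[n]
      (fun μ => expL a μ.1)) μ ∂(ν : Measure (ProbVec E))) atTop (𝓝 c))
    {f : ProbVec E → ℝ} (hf : IsBddCont f) :
    Tendsto (fun n => ∫ μ, ((filterKernel M φ)^[n] f) μ ∂(ν : Measure (ProbVec E))) atTop
      (𝓝 (∫ μ, f μ ∂(𝕄 : Measure (ProbVec E)))) := by
  have hbn : ∀ n, bary ((fT h)^[n] ν) = lam := fun n => by
    rw [bary_iter, hb]; exact Function.iterate_fixed hinv n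
  obtain ⟨ν', hν'⟩ := weak_limit_exists (ν := fun n => (fT h)^[n] ν) lam
    (fun n i => congrFun (congrArg Subtype.val (hbn n)) i) (fun a => by
      obtain ⟨c, hc⟩ := hc a
      exact ⟨c, hc.congr fun n => (iter_integral h (expL_bddCont a) n ν).symm⟩)
  have := huniq ν' (limit_inv h ν ν' hν')
  subst this
  exact (wk_int hν' hf).congr fun n => iter_integral h hf n ν

lemma abs_integral_le (ν : ProbabilityMeasure (ProbVec E)) {f : ProbVec E → ℝ} {C : ℝ}
    (hC : ∀ μ, |f μ| ≤ C) : |∫ μ, f μ ∂(ν : Measure (ProbVec E))| ≤ C := by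
  have := norm_integral_le_of_norm_le_const (f := f) (C := C) (μ := (ν : Measure (ProbVec E)))
    (Eventually.of_forall hC)
  simpa using this

lemma iter_bound (h : GoodP M φ) {f : ProbVec E → ℝ} {C : ℝ} (hC : ∀ μ, |f μ| ≤ C) (n : ℕ) :
    ∀ μ, |((filterKernel M φ)^[n] f) μ| ≤ C := by
  induction n with
  | zero => exact hC
  | succ n ih => rw [Function.iterate_succ_apply']; exact fk_bdd h ih

noncomputable def dirPM (μ : ProbVec E) : ProbabilityMeasure (ProbVec E) :=
  ⟨Measure.dirac μ, inferInstance⟩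

lemma dirPM_integral (μ : ProbVec E) (f : ProbVec E → ℝ) :
    ∫ x, f x ∂(dirPM μ : Measure (ProbVec E)) = f μ := integral_dirac f μ

lemma core [DecidableEq E] (h : GoodP M φ)
    (hirr : ∀ i j : E, ∃ n : ℕ, 0 < matPow (transMat M φ) n i j)
    (hAper : ∀ i : E, ∃ N : ℕ, ∀ n ≥ N, 0 < matPow (transMat M φ) n i i)
    (lam : ProbVec E) (hinv : pvStep (transMat M φ) h.P0 h.tr lam = lam)
    (𝕄 : ProbabilityMeasure (ProbVec E))
    (huniq : ∀ 𝕄' : ProbabilityMeasure (ProbVec E), IsPiInvariant M φ 𝕄' → 𝕄' = 𝕄)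
    (𝕄₀ : ProbabilityMeasure (ProbVec E)) (f : ProbVec E → ℝ) (hf : IsBddCont f) :
    Tendsto (fun n : ℕ => ∫ μ, ((filterKernel M φ)^[n] f) μ ∂(𝕄₀ : Measure (ProbVec E)))
        atTop (nhds (∫ μ, f μ ∂(𝕄 : Measure (ProbVec E)))) := by
  have hbd : bary (dirPM lam) = lam := pv_ext fun i => dirPM_integral lam (fun μ => μ.1 i)
  have ha : ∀ g : ProbVec E → ℝ, IsBddCont g → PVConvex g →
      ∃ c, Tendsto (fun n => ∫ μ, ((filterKernel M φ)^[n] g) μ ∂(dirPM lam : Measure (ProbVec E)))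
        atTop (𝓝 c) := by
    intro g hg hc
    obtain ⟨C, hC⟩ := hg.2
    refine ⟨_, tendsto_atTop_ciSup (monotone_nat_of_le_succ fun n => ?_) ⟨C, ?_⟩⟩
    · rw [Function.iterate_succ_apply', ← fT_integral h _ _ (iter_bddCont h hg n), dirPM_integral]
      have := jensen_bary (iter_bddCont h hg n) (iter_convex h hg hc n) (fT h (dirPM lam))
      rwa [bary_fT, hbd, hinv] at this
    · rintro _ ⟨n, rfl⟩
      exact (abs_le.1 (abs_integral_le _ (iter_bound h hC n))).2
  have hb : ∀ g : ProbVec E → ℝ, IsBddCont g → PVConvex g →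
      ∃ c, Tendsto (fun n => ∫ μ, ((filterKernel M φ)^[n] g) μ ∂(mix lam : Measure (ProbVec E)))
        atTop (𝓝 c) := by
    intro g hg hc
    obtain ⟨C, hC⟩ := hg.2
    refine ⟨_, tendsto_atTop_ciInf (antitone_nat_of_succ_le fun n => ?_) ⟨-C, ?_⟩⟩
    · rw [Function.iterate_succ_apply', ← fT_integral h _ _ (iter_bddCont h hg n),
        mix_integral _ (iter_bddCont h hg n)]
      have := upper_bary (iter_bddCont h hg n) (iter_convex h hg hc n) (fT h (mix lam))
      rwa [bary_fT, mix_bary, hinv] at this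
    · rintro _ ⟨n, rfl⟩
      exact (abs_le.1 (abs_integral_le _ (iter_bound h hC n))).1
  have hw : Tendsto (fun n => (fT h)^[n] 𝕄₀) atTop (𝓝 𝕄) := by
    refine weak_conv_of_exp fun a => ?_
    have hg := expL_bddCont (E := E) a
    have hc := expL_convex (E := E) a
    set g : ProbVec E → ℝ := fun μ => expL a μ.1 with hgdef
    have hA := lim_of_bary h lam hinv 𝕄 huniq (dirPM lam) hbd
      (fun a => ha _ (expL_bddCont a) (expL_convex a)) hg
    have hB := lim_of_bary h lam hinv 𝕄 huniq (mix lam) (mix_bary lam)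
      (fun a => hb _ (expL_bddCont a) (expL_convex a)) hg
    have hmk := markov_conv _ h.P0 h.tr hirr hAper lam hinv (bary 𝕄₀)
    have hsplit : ∀ l k, ∫ μ, g μ ∂((fT h)^[k + l] 𝕄₀ : Measure (ProbVec E)) =
        ∫ μ, ((filterKernel M φ)^[l] g) μ ∂((fT h)^[k] 𝕄₀ : Measure (ProbVec E)) := by
      intro l k
      rw [add_comm, Function.iterate_add_apply, iter_integral h hg]
    rw [tendsto_order]
    constructor
    · intro c hcl
      obtain ⟨l, hl⟩ := (hA.eventually (lt_mem_nhds hcl)).exists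
      rw [dirPM_integral] at hl
      have hcont := (((iter_bddCont h hg l).1.tendsto lam).comp hmk).eventually (lt_mem_nhds hl)
      obtain ⟨N, hN⟩ := eventually_atTop.1 hcont
      refine eventually_atTop.2 ⟨N + l, fun n hn => ?_⟩
      obtain ⟨k, rfl⟩ : ∃ k, n = k + l := ⟨n - l, by omega⟩
      rw [hsplit]
      have h1 := hN k (by omega)
      have h2 := jensen_bary (iter_bddCont h hg l) (iter_convex h hg hc l) ((fT h)^[k] 𝕄₀)
      rw [bary_iter] at h2
      exact lt_of_lt_of_le h1 h2
    · intro c hcl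
      obtain ⟨l, hl⟩ := (hB.eventually (gt_mem_nhds hcl)).exists
      rw [mix_integral _ (iter_bddCont h hg l)] at hl
      obtain ⟨C, hC⟩ := (iter_bddCont h hg l).2
      have hcont := (((pv_cont_pair (fun i : E => hC (pvDelta i))).tendsto lam).comp
        hmk).eventually (gt_mem_nhds hl)
      obtain ⟨N, hN⟩ := eventually_atTop.1 hcont
      refine eventually_atTop.2 ⟨N + l, fun n hn => ?_⟩
      obtain ⟨k, rfl⟩ : ∃ k, n = k + l := ⟨n - l, by omega⟩
      rw [hsplit]
      have h1 := hN k (by omega)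
      have h2 := upper_bary (iter_bddCont h hg l) (iter_convex h hg hc l) ((fT h)^[k] 𝕄₀)
      rw [bary_iter] at h2
      exact lt_of_le_of_lt h2 h1
  exact (wk_int hw hf).congr fun n => iter_integral h hf n 𝕄₀

end PartSeven

set_option linter.unusedSectionVars false

section PartEight
variable {E F : Type*} [Countable E] [Nonempty E] [MeasurableSpace F]
variable {M : F → E → E → ℝ} {φ : Measure F}

lemma tot_cases (hM : GoodM M) (htr : ∀ i, HasSum (fun j => transMat M φ i j) 1) (μ : ProbVec E)
    (hi : Integrable (tot M μ) φ) :
    (∀ i, 0 < μ.1 i → ∀ j, Integrable (fun y => M y i j) φ) ∧ ∫ y, tot M μ y ∂φ = 1 := by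
  have e : tot M μ = fun y => ∑' i, μ.1 i * rsum M i y := funext fun y => tot_eq hM μ y
  rw [e] at hi
  have h2 := h2_tsum (φ := φ) (fun i y => μ.1 i * rsum M i y)
    (fun i y => mul_nonneg (pv_nonneg μ i) (rsum_nonneg hM i y))
    (fun i => (rsum_meas hM i).const_mul _) (fun y => g_sum hM μ y) hi
  have h3 : ∀ i, 0 < μ.1 i → (∀ j, Integrable (fun y => M y i j) φ) ∧ ∫ y, rsum M i y ∂φ = 1 := by
    intro i hpos
    have hr : Integrable (rsum M i) φ := by
      refine ((h2.1 i).const_mul (μ.1 i)⁻¹).congr (Eventually.of_forall fun y => ?_)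
      simp only []
      rw [← mul_assoc, inv_mul_cancel₀ hpos.ne', one_mul]
    have := h2_tsum (φ := φ) (fun j y => M y i j) (fun j y => hM.nn y i j)
      (fun j => hM.meas i j) (fun y => (g_row hM i y).summable) hr
    exact ⟨this.1, this.2.unique (htr i)⟩
  refine ⟨fun i hpos => (h3 i hpos).1, ?_⟩
  rw [e]
  refine h2.2.unique ?_
  have e2 : ∀ i, ∫ y, μ.1 i * rsum M i y ∂φ = μ.1 i := fun i => by
    rw [integral_const_mul]
    rcases (pv_nonneg μ i).eq_or_lt with h0 | h0
    · rw [← h0, zero_mul]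
    · rw [(h3 i h0).2, mul_one]
  simp_rw [e2]
  exact μ.2.2

lemma coord_of_int (hM : GoodM M) (htr : ∀ i, HasSum (fun j => transMat M φ i j) 1) (μ : ProbVec E)
    (hi : Integrable (tot M μ) φ) (j : E) :
    filterKernel M φ (fun ν => ν.1 j) μ = ∑' i, μ.1 i * transMat M φ i j := by
  have hP0 : ∀ i j, 0 ≤ transMat M φ i j := fun i j => integral_nonneg fun y => hM.nn y i j
  change ∫ y, (filterStep M μ y).1 j * tot M μ y ∂φ = ∑' i, μ.1 i * transMat M φ i j
  simp_rw [fs_spec hM]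
  have e2 : ∀ i, ∫ y, μ.1 i * M y i j ∂φ = μ.1 i * transMat M φ i j := fun i => by
    rw [integral_const_mul]; rfl
  have := h1_tsum (φ := φ) (fun i y => μ.1 i * M y i j)
    (fun i y => mul_nonneg (pv_nonneg μ i) (hM.nn y i j))
    (fun i => by
      rcases (pv_nonneg μ i).eq_or_lt with h0 | h0
      · simp [← h0]
      · exact ((tot_cases hM htr μ hi).1 i h0 j).const_mul _)
    (by simpa only [e2] using (pvStep_aux _ hP0 htr μ).1 j)
    (fun y => (g_swap hM μ y).1 j)
  simp only [e2] at this
  exact this.2.tsum_eq.symm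

lemma goodP_of_inv [DecidableEq E] (hM : GoodM M)
    (htr : ∀ i, HasSum (fun j => transMat M φ i j) 1)
    (hPirr : ∀ i j : E, ∃ n : ℕ, 0 < matPow (transMat M φ) n i j)
    (lam : ProbVec E)
    (hlamInv : ∀ j, ∑' i, (lam : E → ℝ) i * transMat M φ i j = (lam : E → ℝ) j)
    (hlamUniq : ∀ ρ : ProbVec E,
      (∀ j, ∑' i, (ρ : E → ℝ) i * transMat M φ i j = (ρ : E → ℝ) j) → ρ = lam)
    (𝕄 : ProbabilityMeasure (ProbVec E)) (h𝕄 : IsPiInvariant M φ 𝕄) : GoodP M φ := by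
  have hP0 : ∀ i j, 0 ≤ transMat M φ i j := fun i j => integral_nonneg fun y => hM.nn y i j
  have hone := h𝕄 (fun _ => 1) ⟨continuous_const, 1, fun _ => by simp⟩
  have e1 : ∀ μ, filterKernel M φ (fun _ => 1) μ = ∫ y, tot M μ y ∂φ := fun μ => by
    change ∫ y, 1 * tot M μ y ∂φ = _
    simp
  simp_rw [e1] at hone
  rw [integral_const, probReal_univ, one_smul] at hone
  have hint : Integrable (fun μ : ProbVec E => ∫ y, tot M μ y ∂φ) (𝕄 : Measure (ProbVec E)) := by
    by_contra hcon
    rw [integral_undef hcon] at hone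
    exact zero_ne_one hone
  have hle : ∀ μ, ∫ y, tot M μ y ∂φ ≤ 1 := fun μ => by
    by_cases hi : Integrable (tot M μ) φ
    · exact (tot_cases hM htr μ hi).2.le
    · rw [integral_undef hi]; exact zero_le_one
  have hae : ∀ᵐ μ ∂(𝕄 : Measure (ProbVec E)), Integrable (tot M μ) φ := by
    have h0 : ∫ μ, (1 - ∫ y, tot M μ y ∂φ) ∂(𝕄 : Measure (ProbVec E)) = 0 := by
      rw [integral_sub (integrable_const _) hint, hone, integral_const, probReal_univ]; simp
    rw [integral_eq_zero_iff_of_nonneg (fun μ => sub_nonneg.2 (hle μ))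
      ((integrable_const _).sub hint)] at h0
    filter_upwards [h0] with μ hμ
    by_contra hcon
    rw [integral_undef hcon] at hμ
    simp at hμ
  have hb : bary 𝕄 = lam := by
    refine hlamUniq _ fun j => ?_
    rw [← bary_pair 𝕄 (fun i => stoch_le_one _ hP0 htr i j)]
    have := h𝕄 _ (coord_bddCont j)
    refine Eq.trans ?_ this
    refine integral_congr_ae ?_
    filter_upwards [hae] with μ hμ
    exact (coord_of_int hM htr μ hμ j).symm
  refine ⟨hM, fun i j => ?_, htr⟩
  have hpos := lam_pos _ hP0 htr hPirr lam (pv_ext hlamInv) i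
  have hex : ∃ μ : ProbVec E, Integrable (tot M μ) φ ∧ 0 < μ.1 i := by
    by_contra hcon
    push Not at hcon
    have : (bary 𝕄).1 i ≤ 0 := by
      refine integral_nonpos_of_ae ?_
      filter_upwards [hae] with μ hμ
      exact hcon μ hμ
    rw [hb] at this
    linarith
  obtain ⟨μ, h1, h2⟩ := hex
  exact (tot_cases hM htr μ h1).1 i h2 j

open Classical in
noncomputable def cutM (M : F → E → E → ℝ) (N : Set F) : F → E → E → ℝ :=
  fun y i j => if y ∈ N then 0 else M y i j

lemma cutM_good {N : Set F} (hN : MeasurableSet N)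
    (hMmeas : ∀ i j, Measurable fun y => M y i j) (hMnn : ∀ y i j, 0 ≤ M y i j)
    (hb : ∀ y, y ∉ N → ∃ C : ℝ, ∀ (i : E) (s : Finset E), ∑ j ∈ s, M y i j ≤ C) :
    GoodM (cutM M N) := by
  refine ⟨fun i j => Measurable.ite hN measurable_const (hMmeas i j), fun y i j => ?_, fun y => ?_⟩
  · unfold cutM; split_ifs
    · exact le_rfl
    · exact hMnn y i j
  · by_cases hy : y ∈ N
    · exact ⟨0, fun i s => by simp [cutM, hy]⟩
    · simpa [cutM, hy] using hb y hy

lemma cutM_ae {N : Set F} (hN : φ N = 0) : ∀ᵐ y ∂φ, cutM M N y = M y := by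
  have : ∀ᵐ y ∂φ, y ∉ N := measure_eq_zero_iff_ae_notMem.1 hN
  filter_upwards [this] with y hy
  funext i j
  simp [cutM, hy]

lemma cutM_trans {N : Set F} (hN : φ N = 0) : transMat (cutM M N) φ = transMat M φ := by
  funext i j
  refine integral_congr_ae ?_
  filter_upwards [cutM_ae (M := M) hN] with y hy
  rw [hy]

lemma cutM_kernel {N : Set F} (hN : φ N = 0) : filterKernel (cutM M N) φ = filterKernel M φ := by
  funext f μ
  refine integral_congr_ae ?_
  filter_upwards [cutM_ae (M := M) hN] with y hy
  have hr : rowMul (cutM M N) μ.1 y = rowMul M μ.1 y := by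
    funext j; simp only [rowMul, hy]
  have hs : filterStep (cutM M N) μ y = filterStep M μ y := by
    unfold filterStep
    generalize rowMul (cutM M N) μ.1 y = a at hr ⊢
    subst hr
    rfl
  rw [hs, hr]

end PartEight
/-- If the signal transition matrix is aperiodic and the filter transition kernel `Π`
has a unique invariant probability measure `𝕄`, then the law of the filter converges
weakly to `𝕄`: `∫ Π^n f d𝕄₀ → ∫ f d𝕄` for every bounded continuous `f`. -/
theorem convergence_to_unique_invariant_measure_of_aperiodic
    {E : Type*} [Countable E] [Nonempty E] [DecidableEq E]
    {F : Type*} [TopologicalSpace F] [PolishSpace F] [MeasurableSpace F] [BorelSpace F]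
    (φ : Measure F) [SigmaFinite φ]
    (M : F → E → E → ℝ)
    (hMmeas : ∀ i j, Measurable fun y => M y i j)
    (hMnn : ∀ y i j, 0 ≤ M y i j)
    (hMbd : ∀ᵐ y ∂φ, ∃ C : ℝ, ∀ (i : E) (s : Finset E), ∑ j ∈ s, M y i j ≤ C)
    (hPtrans : ∀ i, HasSum (fun j => transMat M φ i j) 1)
    (hPirr : ∀ i j : E, ∃ n : ℕ, 0 < matPow (transMat M φ) n i j)
    (lam : ProbVec E)
    (hlamInv : ∀ j, ∑' i, (lam : E → ℝ) i * transMat M φ i j = (lam : E → ℝ) j)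
    (hlamUniq : ∀ ρ : ProbVec E,
      (∀ j, ∑' i, (ρ : E → ℝ) i * transMat M φ i j = (ρ : E → ℝ) j) → ρ = lam)
    (hAper : ∀ i : E, ∃ N : ℕ, ∀ n ≥ N, 0 < matPow (transMat M φ) n i i)
    (𝕄 : ProbabilityMeasure (ProbVec E)) (h𝕄 : IsPiInvariant M φ 𝕄)
    (huniq : ∀ 𝕄' : ProbabilityMeasure (ProbVec E), IsPiInvariant M φ 𝕄' → 𝕄' = 𝕄) :
    ∀ (𝕄₀ : ProbabilityMeasure (ProbVec E)) (f : ProbVec E → ℝ), IsBddCont f →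
      Tendsto (fun n : ℕ => ∫ μ, ((filterKernel M φ)^[n] f) μ ∂(𝕄₀ : Measure (ProbVec E)))
        atTop (nhds (∫ μ, f μ ∂(𝕄 : Measure (ProbVec E)))) := by
  intro 𝕄₀ f hf
  set B : Set F := {y | ¬ ∃ C : ℝ, ∀ (i : E) (s : Finset E), ∑ j ∈ s, M y i j ≤ C} with hB
  have hB0 : φ B = 0 := hMbd
  have hN0 : φ (toMeasurable φ B) = 0 := by rw [measure_toMeasurable, hB0]
  have hG : GoodM (cutM M (toMeasurable φ B)) :=
    cutM_good (measurableSet_toMeasurable _ _) hMmeas hMnn fun y hy => by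
      by_contra hcon
      exact hy (subset_toMeasurable φ B hcon)
  have et := cutM_trans (M := M) hN0
  have ek := cutM_kernel (M := M) hN0
  have ei : ∀ ν, IsPiInvariant (cutM M (toMeasurable φ B)) φ ν ↔ IsPiInvariant M φ ν := fun ν => by
    unfold IsPiInvariant; rw [ek]
  have hP : GoodP (cutM M (toMeasurable φ B)) φ :=
    goodP_of_inv hG (by rwa [et]) (by rwa [et]) lam (by rwa [et]) (by rwa [et]) 𝕄 ((ei 𝕄).2 h𝕄)
  have := core hP (by rwa [et]) (by rwa [et]) lam (pv_ext (by
    change ∀ j, ∑' i, lam.1 i * transMat _ φ i j = lam.1 j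
    rwa [et])) 𝕄 (fun ν hν => huniq ν ((ei ν).1 hν)) 𝕄₀ f hf
  rwa [ek] at this
end
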